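/- arXiv:1510.05081 — 2 statements merged into one kernel-verified Lean document; each statement's English description precedes it below -/
import Mathlib

section
/- Let Ω ⊂ ℝ² be a bounded Lipschitz open set and u ∈ BV(Ω). Then there exists a sequence (u_n) ⊂ C¹(Ω) ∩ W^{1,1}(Ω) such that u_n → u in L¹(Ω), ∫_Ω |∇u_n| → ∫_Ω |Du|, tr_{∂Ω} u_n = tr_{∂Ω} u for all n, and moreover for k ∈ {1,2}, ∫_Ω |∂_k u_n| → ∫_Ω |D_k u|. -/
noncomputable section
open MeasureTheory Filter Set Topology Metric

/-- The Euclidean plane. -/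
abbrev E2 : Type := EuclideanSpace ℝ (Fin 2)

/-- Divergence of a vector field on the plane. -/
def divg (ξ : E2 → E2) (x : E2) : ℝ :=
  ∑ i : Fin 2, fderiv ℝ ξ x (EuclideanSpace.single i 1) i

/-- Test values for the total variation of `u` on `Ω`: numbers `∫_Ω u div ξ` for
vector fields `ξ ∈ C¹_c(Ω, ℝ²)` with `|ξ| ≤ 1`. -/
def varSet (Ω : Set E2) (u : E2 → ℝ) : Set ℝ :=
  {v | ∃ ξ : E2 → E2, ContDiff ℝ 1 ξ ∧ HasCompactSupport ξ ∧ tsupport ξ ⊆ Ω ∧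
      (∀ x, ‖ξ x‖ ≤ 1) ∧ v = ∫ x in Ω, u x * divg ξ x}

/-- The total variation `∫_Ω |Du|`. -/
def totalVar (Ω : Set E2) (u : E2 → ℝ) : ℝ := sSup (varSet Ω u)

/-- `u` is of bounded variation on `Ω`. -/
def IsBVOn (Ω : Set E2) (u : E2 → ℝ) : Prop :=
  IntegrableOn u Ω volume ∧ BddAbove (varSet Ω u)

/-- `u` has trace `h` on the part of `∂Ω` carried by the boundary measure `μb`:
for `μb`-a.e. boundary point `x`, the averages of `|u - h x|` over `B(x,r) ∩ Ω`
tend to `0` as `r → 0⁺`. -/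
def HasTraceOn (Ω : Set E2) (μb : Measure E2) (u h : E2 → ℝ) : Prop :=
  ∀ᵐ x ∂μb, Tendsto (fun r : ℝ => ⨍ y in ball x r ∩ Ω, |u y - h x|)
    (𝓝[>] (0:ℝ)) (𝓝 0)

/-- Test values for the variation of `u` in the `k`-th coordinate direction. -/
def dirVarSet (Ω : Set E2) (u : E2 → ℝ) (k : Fin 2) : Set ℝ :=
  {v | ∃ ξ : E2 → ℝ, ContDiff ℝ 1 ξ ∧ HasCompactSupport ξ ∧ tsupport ξ ⊆ Ω ∧
      (∀ x, |ξ x| ≤ 1) ∧ v = ∫ x in Ω, u x * fderiv ℝ ξ x (EuclideanSpace.single k 1)}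

/-- The directional variation `∫_Ω |D_k u|`. -/
def dirVar (Ω : Set E2) (u : E2 → ℝ) (k : Fin 2) : ℝ := sSup (dirVarSet Ω u k)

/-- `s ⊆ ℝ²` is a Lipschitz open set: near each boundary point, `s` is the open
subgraph of a Lipschitz function in suitable rotated coordinates. -/
def IsLipschitzSet (s : Set E2) : Prop :=
  ∀ x ∈ frontier s, ∃ (e : E2 ≃ₗᵢ[ℝ] E2) (f : ℝ → ℝ) (L : NNReal) (ε : ℝ),
    0 < ε ∧ LipschitzWith L f ∧
    ∀ y ∈ ball x ε, (y ∈ s ↔ (e (y - x)) 1 < f ((e (y - x)) 0))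

section Mollification

variable {V W : Type} [NormedAddCommGroup V] [NormedSpace ℝ V]
  [NormedAddCommGroup W] [NormedSpace ℝ W]

/-- Mollification of `g` by the normalized bump function `φ`. -/
def mollify (φ : ContDiffBump (0 : E2)) (g : E2 → V) : E2 → V :=
  convolution (φ.normed volume) g (ContinuousLinearMap.lsmul ℝ ℝ) volume

theorem mollify_apply (φ : ContDiffBump (0 : E2)) (g : E2 → V) (x : E2) :
    mollify φ g x = ∫ y, φ.normed volume (x - y) • g y :=
  convolution_lsmul_swap

theorem integrable_mollify (φ : ContDiffBump (0 : E2)) {g : E2 → V} (hg : Integrable g) :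
    Integrable (mollify φ g) :=
  φ.integrable_normed.integrable_convolution _ hg

theorem contDiff_mollify (φ : ContDiffBump (0 : E2)) {g : E2 → V} (hg : LocallyIntegrable g)
    (n : ℕ∞) : ContDiff ℝ n (mollify φ g) :=
  φ.hasCompactSupport_normed.contDiff_convolution_left _ φ.contDiff_normed hg

theorem exists_ne_zero_of_mollify_ne_zero (φ : ContDiffBump (0 : E2)) {g : E2 → V} {x : E2}
    (h : mollify φ g x ≠ 0) : ∃ y, dist x y < φ.rOut ∧ g y ≠ 0 := by
  by_contra! hc
  apply h
  rw [mollify_apply]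
  refine integral_eq_zero_of_ae (Eventually.of_forall fun y => ?_)
  by_cases hy : dist x y < φ.rOut
  · simp [hc y hy]
  · have : x - y ∉ Function.support (φ.normed volume) := by
      rw [φ.support_normed_eq]
      simpa [dist_eq_norm] using hy
    simp [Function.notMem_support.1 this]

theorem integrable_normed_smul (φ : ContDiffBump (0 : E2)) {g : E2 → V} (hg : Integrable g)
    (x : E2) : Integrable fun y => φ.normed volume (x - y) • g y := by
  obtain ⟨C, hC⟩ := φ.hasCompactSupport_normed (μ := volume).exists_bound_of_continuous
    φ.continuous_normed
  exact hg.bdd_smul C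
    (φ.continuous_normed.comp (continuous_const.sub continuous_id)).aestronglyMeasurable
    (Eventually.of_forall fun y => hC _)

theorem norm_mollify_le (φ : ContDiffBump (0 : E2)) {g : E2 → V} {C : ℝ}
    (hg : ∀ x, ‖g x‖ ≤ C) (x : E2) : ‖mollify φ g x‖ ≤ C := by
  have h1 : ‖mollify φ g x‖ ≤ ∫ y, φ.normed volume y * C := by
    refine norm_integral_le_of_norm_le (φ.integrable_normed.mul_const C)
      (Eventually.of_forall fun y => ?_)
    simp only [ContinuousLinearMap.lsmul_apply, norm_smul, Real.norm_eq_abs,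
      abs_of_nonneg (φ.nonneg_normed y)]
    exact mul_le_mul_of_nonneg_left (hg _) (φ.nonneg_normed y)
  rwa [integral_mul_const, φ.integral_normed, one_mul] at h1

theorem integral_mollify_pairing [CompleteSpace V] [CompleteSpace W]
    (φ : ContDiffBump (0 : E2)) (B : V →L[ℝ] W →L[ℝ] ℝ)
    {g : E2 → V} {h : E2 → W} (hg : Integrable g) (hh : Integrable h) :
    ∫ x, B (mollify φ g x) (h x) = ∫ x, B (g x) (mollify φ h x) := by
  have hl : ∀ x, B (mollify φ g x) (h x) =
      ∫ y, φ.normed volume (x - y) * B (g y) (h x) := fun x => by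
    rw [mollify_apply]
    have := ((B.flip (h x)).integral_comp_comm (integrable_normed_smul φ hg x)).symm
    simpa using this
  have hr : ∀ y, B (g y) (mollify φ h y) =
      ∫ x, φ.normed volume (x - y) * B (g y) (h x) := fun y => by
    rw [mollify_apply]
    have := ((B (g y)).integral_comp_comm (integrable_normed_smul φ hh y)).symm
    rw [this]
    congr 1 with x
    rw [← φ.normed_neg, neg_sub]
    simp
  simp_rw [hl, hr]
  apply integral_integral_swap
  obtain ⟨C, hC⟩ := φ.hasCompactSupport_normed (μ := volume).exists_bound_of_continuous
    φ.continuous_normed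
  refine Integrable.bdd_mul (c := C) ?_
    (φ.continuous_normed.comp (continuous_fst.sub continuous_snd)).aestronglyMeasurable
    (Eventually.of_forall fun y => hC _)
  refine Integrable.mono' ((hh.norm.mul_prod hg.norm).const_mul ‖B‖) ?_ ?_
  · have h1 : AEStronglyMeasurable (fun p : E2 × E2 => (g p.2, h p.1)) (volume.prod volume) :=
      hg.1.comp_snd.prodMk hh.1.comp_fst
    exact (show Continuous fun q : V × W => B q.1 q.2 by fun_prop).comp_aestronglyMeasurable h1
  · refine Eventually.of_forall fun p => ?_
    calc ‖B (g p.2) (h p.1)‖ ≤ ‖B‖ * ‖g p.2‖ * ‖h p.1‖ := B.le_opNorm₂ _ _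
      _ = _ := by ring

theorem fderiv_mollify_apply [CompleteSpace V] (φ : ContDiffBump (0 : E2)) {g : E2 → V}
    (hg : ContDiff ℝ 1 g) (hc : HasCompactSupport g) (x e : E2) :
    fderiv ℝ (mollify φ g) x e = mollify φ (fun y => fderiv ℝ g y e) x := by
  have h := hc.hasFDerivAt_convolution_right (ContinuousLinearMap.lsmul ℝ ℝ)
    ((φ.continuous_normed (μ := volume)).locallyIntegrable (μ := volume)) hg x
  change fderiv ℝ (convolution _ _ _ _) x e = _
  rw [h.fderiv]
  have hi : Integrable (fderiv ℝ g) :=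
    (hg.continuous_fderiv one_ne_zero).integrable_of_hasCompactSupport (hc.fderiv ℝ)
  have hex : ConvolutionExistsAt (φ.normed volume) (fderiv ℝ g) x
      ((ContinuousLinearMap.lsmul ℝ ℝ : ℝ →L[ℝ] V →L[ℝ] V).precompR E2) volume :=
    (hc.fderiv ℝ).convolutionExists_right _ φ.continuous_normed.locallyIntegrable
      (hg.continuous_fderiv one_ne_zero) x
  exact (ContinuousLinearMap.apply ℝ V e).integral_comp_comm hex.integrable |>.symm

theorem mollify_sub (φ : ContDiffBump (0 : E2)) {g h : E2 → V} (hg : Integrable g)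
    (hh : Integrable h) (x : E2) : mollify φ (g - h) x = mollify φ g x - mollify φ h x := by
  simp_rw [mollify_apply, Pi.sub_apply, smul_sub]
  exact integral_sub (integrable_normed_smul φ hg x) (integrable_normed_smul φ hh x)

theorem integral_norm_mollify_le (φ : ContDiffBump (0 : E2)) {g : E2 → V} (hg : Integrable g) :
    ∫ x, ‖mollify φ g x‖ ≤ ∫ x, ‖g x‖ := by
  calc ∫ x, ‖mollify φ g x‖ ≤ ∫ x, mollify φ (fun y => ‖g y‖) x := by
        refine integral_mono (integrable_mollify φ hg).norm (integrable_mollify φ hg.norm)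
          fun x => ?_
        simp only [mollify_apply]
        refine (norm_integral_le_integral_norm _).trans_eq (integral_congr_ae
          (Eventually.of_forall fun y => ?_))
        simp [norm_smul, abs_of_nonneg (φ.nonneg_normed (μ := volume) (x - y))]
    _ = ∫ x, ‖g x‖ := by
        rw [mollify, integral_convolution _ φ.integrable_normed hg.norm, φ.integral_normed]
        simp

theorem exists_integral_norm_mollify_sub_le [CompleteSpace V] {g : E2 → V}
    (hg : Integrable g) {δ : ℝ} (hδ : 0 < δ) :
    ∃ ρ > 0, ∀ φ : ContDiffBump (0 : E2), φ.rOut ≤ ρ →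
      ∫ x, ‖mollify φ g x - g x‖ ≤ δ := by
  obtain ⟨h, hc, hgh, hcont, hint⟩ := hg.exists_hasCompactSupport_integral_sub_le
    (show 0 < δ / 3 by positivity)
  set K := cthickening 1 (tsupport h) with hK
  have hKc : IsCompact K := hc.isCompact.cthickening
  have hpos : 0 < volume.real K + 1 := by positivity
  set η := δ / 3 / (volume.real K + 1) with hη
  have hηpos : 0 < η := by positivity
  obtain ⟨ρ, hρ, hunif⟩ := Metric.uniformContinuous_iff.1
    (hc.uniformContinuous_of_continuous hcont) η hηpos
  refine ⟨min ρ 1, by positivity, fun φ hφ => ?_⟩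
  have hclose : ∀ x, ‖mollify φ h x - h x‖ ≤ η := fun x => by
    rw [← dist_eq_norm]
    refine φ.dist_normed_convolution_le hcont.aestronglyMeasurable fun y hy => ?_
    exact (hunif ((mem_ball.1 hy).trans_le (hφ.trans (min_le_left _ _)))).le
  have hzero : ∀ x, x ∉ K → mollify φ h x - h x = 0 := fun x hx => by
    have h1 : h x = 0 := image_eq_zero_of_notMem_tsupport fun hmem =>
      hx (self_subset_cthickening _ hmem)
    have h2 : mollify φ h x = 0 := by
      by_contra hne
      obtain ⟨y, hxy, hy⟩ := exists_ne_zero_of_mollify_ne_zero φ hne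
      exact hx (mem_cthickening_of_dist_le x y 1 _ (subset_tsupport _ hy)
        (hxy.le.trans (hφ.trans (min_le_right _ _))))
    rw [h1, h2, sub_zero]
  have hmid : ∫ x, ‖mollify φ h x - h x‖ ≤ δ / 3 := by
    calc ∫ x, ‖mollify φ h x - h x‖ = ∫ x in K, ‖mollify φ h x - h x‖ := by
          refine (setIntegral_eq_integral_of_forall_compl_eq_zero fun x hx => ?_).symm
          rw [hzero x hx, norm_zero]
      _ ≤ ∫ x in K, η := by
          refine setIntegral_mono ((integrable_mollify φ hint).sub hint).norm.integrableOn
            (integrableOn_const hKc.measure_ne_top) fun x => hclose x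
      _ = volume.real K * η := by simp
      _ ≤ (volume.real K + 1) * η := by gcongr; linarith
      _ = δ / 3 := by rw [hη]; field_simp
  have hd : Integrable (g - h) := hg.sub hint
  calc ∫ x, ‖mollify φ g x - g x‖
      ≤ ∫ x, (‖mollify φ (g - h) x‖ + ‖mollify φ h x - h x‖ + ‖(g - h) x‖) := by
        refine integral_mono ((integrable_mollify φ hg).sub hg).norm
          (((integrable_mollify φ hd).norm.add ((integrable_mollify φ hint).sub hint).norm).add
            hd.norm) fun x => ?_
        have : mollify φ g x - g x =
            mollify φ (g - h) x + (mollify φ h x - h x) - (g - h) x := by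
          rw [mollify_sub φ hg hint, Pi.sub_apply]; abel
        simp only [this]
        exact (norm_sub_le _ _).trans (by gcongr; exact norm_add_le _ _)
    _ = (∫ x, ‖mollify φ (g - h) x‖) + (∫ x, ‖mollify φ h x - h x‖) + ∫ x, ‖(g - h) x‖ := by
        rw [integral_add, integral_add]
        · exact (integrable_mollify φ hd).norm
        · exact ((integrable_mollify φ hint).sub hint).norm
        · exact (integrable_mollify φ hd).norm.add ((integrable_mollify φ hint).sub hint).norm
        · exact hd.norm
    _ ≤ δ / 3 + δ / 3 + δ / 3 := by
        have h1 := integral_norm_mollify_le φ hd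
        have h2 : ∫ x, ‖(g - h) x‖ ≤ δ / 3 := hgh
        linarith
    _ = δ := by ring

end Mollification

section Partition

theorem infDist_compl_pos {Ω : Set E2} (hopen : IsOpen Ω) (hbdd : Bornology.IsBounded Ω) {x : E2} :
    0 < infDist x Ωᶜ ↔ x ∈ Ω := by
  have hne : (Ωᶜ).Nonempty := by
    rw [nonempty_compl]
    rintro rfl
    exact NormedSpace.unbounded_univ ℝ E2 hbdd
  rw [← hopen.isClosed_compl.notMem_iff_infDist_pos hne, notMem_compl_iff]

theorem isCompact_le_infDist_compl {Ω : Set E2} (hopen : IsOpen Ω) (hbdd : Bornology.IsBounded Ω)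
    {r : ℝ} (hr : 0 < r) : IsCompact {x | r ≤ infDist x Ωᶜ} := by
  refine isCompact_of_isClosed_isBounded
    (isClosed_le continuous_const (continuous_infDist_pt _)) (hbdd.subset fun x hx => ?_)
  exact (infDist_compl_pos hopen hbdd).1 (hr.trans_le hx)

theorem exists_smooth_cutoff {Ω : Set E2} {a b : ℝ} (hab : a < b) :
    ∃ χ : E2 → ℝ, (∀ n : ℕ∞, ContDiff ℝ n χ) ∧ (∀ x, χ x ∈ Icc (0 : ℝ) 1) ∧
      (∀ x, infDist x Ωᶜ ≤ a → χ x = 0) ∧ ∀ x, b ≤ infDist x Ωᶜ → χ x = 1 := by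
  obtain ⟨f, hf, hr, h0, h1⟩ := exists_contMDiff_zero_iff_one_iff_of_isClosed
    (modelWithCornersSelf ℝ E2) (n := ⊤) (s := {x | infDist x Ωᶜ ≤ a})
    (t := {x | b ≤ infDist x Ωᶜ})
    (isClosed_le (continuous_infDist_pt _) continuous_const)
    (isClosed_le continuous_const (continuous_infDist_pt _))
    (disjoint_left.2 fun x (hx : _ ≤ a) (hx' : b ≤ _) => by linarith)
  exact ⟨f, fun n => hf.contDiff.of_le (by exact_mod_cast le_top), fun x => hr (mem_range_self x),
    fun x hx => (h0 x).1 hx, fun x hx => (h1 x).1 hx⟩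

/-- A smooth partition of unity of `Ω` subordinate to dyadic shells around the boundary. -/
structure ShellPartition (Ω : Set E2) where
  /-- The members of the partition. -/
  toFun : ℕ → E2 → ℝ
  contDiff : ∀ j, ∀ n : ℕ∞, ContDiff ℝ n (toFun j)
  nonneg : ∀ j x, 0 ≤ toFun j x
  lower : ∀ j x, toFun j x ≠ 0 → (1 / 2 : ℝ) ^ (j + 1) < infDist x Ωᶜ
  upper : ∀ j x, toFun (j + 1) x ≠ 0 → infDist x Ωᶜ < (1 / 2 : ℝ) ^ j
  sum_eq_one : ∀ N x, (1 / 2 : ℝ) ^ N ≤ infDist x Ωᶜ → ∑ j ∈ Finset.range (N + 1), toFun j x = 1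
  sum_le_one : ∀ N x, ∑ j ∈ Finset.range N, toFun j x ≤ 1

theorem nonempty_shellPartition (Ω : Set E2) : Nonempty (ShellPartition Ω) := by
  have hlt : ∀ j : ℕ, (1 / 2 : ℝ) ^ (j + 1) < (1 / 2) ^ j := fun j =>
    pow_lt_pow_right_of_lt_one₀ (by norm_num) (by norm_num) (Nat.lt_succ_self j)
  choose χ hsm hr h0 h1 using fun j : ℕ => exists_smooth_cutoff (Ω := Ω) (hlt j)
  have hmono : ∀ j x, χ j x ≤ χ (j + 1) x := fun j x => by
    by_cases hx : infDist x Ωᶜ ≤ (1 / 2) ^ (j + 1)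
    · rw [h0 j x hx]; exact (hr _ x).1
    · rw [h1 (j + 1) x (not_le.1 hx).le]; exact (hr _ x).2
  let ζ : ℕ → E2 → ℝ := fun j => Nat.casesOn j (χ 0) fun j x => χ (j + 1) x - χ j x
  have hsum : ∀ N x, ∑ j ∈ Finset.range (N + 1), ζ j x = χ N x := fun N x => by
    induction N with
    | zero => simp [ζ]
    | succ N ih => rw [Finset.sum_range_succ, ih]; simp [ζ]
  refine ⟨⟨ζ, ?_, ?_, ?_, ?_, ?_, ?_⟩⟩
  · rintro (_ | j) n
    · exact hsm 0 n
    · exact (hsm (j + 1) n).sub (hsm j n)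
  · rintro (_ | j) x
    · exact (hr 0 x).1
    · exact sub_nonneg.2 (hmono j x)
  · rintro (_ | j) x hx
    · by_contra! hle
      exact hx (h0 0 x hle)
    · by_contra! hle
      exact hx (by simp [ζ, h0 (j + 1) x hle, h0 j x (hle.trans (hlt (j + 1)).le)])
  · intro j x hx
    by_contra! hle
    exact hx (by simp [ζ, h1 j x hle, h1 (j + 1) x ((hlt j).le.trans hle)])
  · intro N x hx
    rw [hsum, h1 N x hx]
  · rintro (_ | N) x
    · simp
    · rw [hsum]; exact (hr N x).2

theorem ShellPartition.tsupport_subset {Ω : Set E2} (ζ : ShellPartition Ω) (j : ℕ) :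
    tsupport (ζ.toFun j) ⊆ {x | (1 / 2 : ℝ) ^ (j + 1) ≤ infDist x Ωᶜ} :=
  closure_minimal (fun x hx => (ζ.lower j x hx).le)
    (isClosed_le continuous_const (continuous_infDist_pt _))

theorem ShellPartition.hasCompactSupport {Ω : Set E2} (ζ : ShellPartition Ω) (hopen : IsOpen Ω)
    (hbdd : Bornology.IsBounded Ω) (j : ℕ) : HasCompactSupport (ζ.toFun j) :=
  (isCompact_le_infDist_compl hopen hbdd (by positivity)).of_isClosed_subset
    (isClosed_tsupport _) (ζ.tsupport_subset j)

end Partition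

section Divergence

variable {V F : Type} [NormedAddCommGroup V] [NormedSpace ℝ V]
  [NormedAddCommGroup F] [NormedSpace ℝ F]

theorem mollify_clm_comp [CompleteSpace V] [CompleteSpace F] (φ : ContDiffBump (0 : E2))
    (A : V →L[ℝ] F) {g : E2 → V} (hg : Integrable g) (x : E2) :
    mollify φ (fun y => A (g y)) x = A (mollify φ g x) := by
  simp only [mollify_apply]
  rw [← A.integral_comp_comm (integrable_normed_smul φ hg x)]
  simp

theorem contDiff_of_contDiffOn_of_tsupport_subset {Ω : Set E2} (hopen : IsOpen Ω)
    {n : WithTop ℕ∞} {f : E2 → V} (hf : ContDiffOn ℝ n f Ω) (hs : tsupport f ⊆ Ω) :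
    ContDiff ℝ n f := by
  rw [contDiff_iff_contDiffAt]
  intro x
  by_cases hx : x ∈ tsupport f
  · exact hf.contDiffAt (hopen.mem_nhds (hs hx))
  · exact (contDiffAt_const (c := (0 : V))).congr_of_eventuallyEq
      (notMem_tsupport_iff_eventuallyEq.1 hx)

/-- The functional `A ↦ tr (T ∘ A)`. -/
def traceAlong (T : F →L[ℝ] E2) : (E2 →L[ℝ] F) →L[ℝ] ℝ :=
  ∑ i : Fin 2, (EuclideanSpace.proj i : E2 →L[ℝ] ℝ) ∘L T ∘L
    ContinuousLinearMap.apply ℝ F (EuclideanSpace.single i (1 : ℝ))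

/-- The divergence of `T ∘ ξ`. -/
def divAlong (T : F →L[ℝ] E2) (ξ : E2 → F) (x : E2) : ℝ := traceAlong T (fderiv ℝ ξ x)

theorem divAlong_eq_sum (T : F →L[ℝ] E2) (ξ : E2 → F) (x : E2) :
    divAlong T ξ x = ∑ i : Fin 2, T (fderiv ℝ ξ x (EuclideanSpace.single i 1)) i := by
  simp [divAlong, traceAlong]

theorem continuous_divAlong (T : F →L[ℝ] E2) {ξ : E2 → F} (hξ : ContDiff ℝ 1 ξ) :
    Continuous (divAlong T ξ) :=
  (traceAlong T).continuous.comp (hξ.continuous_fderiv one_ne_zero)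

theorem hasCompactSupport_divAlong (T : F →L[ℝ] E2) {ξ : E2 → F} (hξ : HasCompactSupport ξ) :
    HasCompactSupport (divAlong T ξ) :=
  (hξ.fderiv ℝ).comp_left (map_zero _)

theorem divAlong_eq_zero (T : F →L[ℝ] E2) {ξ : E2 → F} {x : E2} (hx : x ∉ tsupport ξ) :
    divAlong T ξ x = 0 := by
  have h : fderiv ℝ ξ x = 0 := by
    by_contra hne
    exact hx (support_fderiv_subset ℝ hne)
  rw [divAlong, h, map_zero]

theorem divAlong_smul (T : F →L[ℝ] E2) {f : E2 → ℝ} {ξ : E2 → F} {x : E2}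
    (hf : DifferentiableAt ℝ f x) (hξ : DifferentiableAt ℝ ξ x) :
    divAlong T (fun y => f y • ξ y) x = f x * divAlong T ξ x + fderiv ℝ f x (T (ξ x)) := by
  have hd : T (ξ x) = ∑ i : Fin 2, (T (ξ x) i) • EuclideanSpace.single i (1 : ℝ) := by
    ext i
    fin_cases i <;> simp
  have hs : fderiv ℝ f x (T (ξ x)) =
      ∑ i : Fin 2, T (ξ x) i * fderiv ℝ f x (EuclideanSpace.single i 1) := by
    conv_lhs => rw [hd]
    simp
  rw [hs, divAlong_eq_sum, divAlong_eq_sum, fderiv_fun_smul hf hξ]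
  simp
  ring

theorem divAlong_sum (T : F →L[ℝ] E2) {ι : Type} (s : Finset ι) {ξ : ι → E2 → F} {x : E2}
    (hξ : ∀ i ∈ s, DifferentiableAt ℝ (ξ i) x) :
    divAlong T (fun y => ∑ i ∈ s, ξ i y) x = ∑ i ∈ s, divAlong T (ξ i) x := by
  simp only [divAlong]
  rw [fderiv_fun_sum hξ, map_sum]

theorem divAlong_mollify [CompleteSpace F] (T : F →L[ℝ] E2) (φ : ContDiffBump (0 : E2))
    {ξ : E2 → F} (hξ : ContDiff ℝ 1 ξ) (hc : HasCompactSupport ξ) (x : E2) :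
    divAlong T (mollify φ ξ) x = mollify φ (divAlong T ξ) x := by
  have hi : Integrable (fderiv ℝ ξ) :=
    (hξ.continuous_fderiv one_ne_zero).integrable_of_hasCompactSupport (hc.fderiv ℝ)
  have h : fderiv ℝ (mollify φ ξ) x = mollify φ (fderiv ℝ ξ) x := by
    ext e
    rw [fderiv_mollify_apply φ hξ hc]
    exact mollify_clm_comp φ (ContinuousLinearMap.apply ℝ F e) hi x
  rw [divAlong, h]
  exact (mollify_clm_comp φ (traceAlong T) hi x).symm

theorem integral_divAlong_eq_zero (T : F →L[ℝ] E2) {ξ : E2 → F} (hξ : ContDiff ℝ 1 ξ)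
    (hc : HasCompactSupport ξ) : ∫ x, divAlong T ξ x = 0 := by
  have hcomp : ∀ (i : Fin 2) (x : E2), T (fderiv ℝ ξ x (EuclideanSpace.single i 1)) i =
      fderiv ℝ (fun y => T (ξ y) i) x (EuclideanSpace.single i 1) := fun i x => by
    have := (((EuclideanSpace.proj i : E2 →L[ℝ] ℝ) ∘L T).hasFDerivAt.comp x
      (hξ.differentiable one_ne_zero x).hasFDerivAt).fderiv
    change _ = fderiv ℝ (((EuclideanSpace.proj i : E2 →L[ℝ] ℝ) ∘L T) ∘ ξ) x _
    rw [this]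
    rfl
  have hsm : ∀ i : Fin 2, ContDiff ℝ 1 fun y => T (ξ y) i := fun i =>
    ((EuclideanSpace.proj i : E2 →L[ℝ] ℝ) ∘L T).contDiff.comp hξ
  have hcs : ∀ i : Fin 2, HasCompactSupport fun y => T (ξ y) i := fun i =>
    hc.comp_left (g := fun w => T w i) (by simp)
  have hint : ∀ i : Fin 2,
      Integrable fun x => fderiv ℝ (fun y => T (ξ y) i) x (EuclideanSpace.single i (1 : ℝ)) :=
    fun i => (((hsm i).continuous_fderiv one_ne_zero).clm_apply
      continuous_const).integrable_of_hasCompactSupport ((hcs i).fderiv_apply ℝ _)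
  simp_rw [divAlong_eq_sum, hcomp]
  rw [integral_finsetSum _ fun i _ => hint i]
  refine Finset.sum_eq_zero fun i _ => ?_
  have := integral_mul_fderiv_eq_neg_fderiv_mul_of_integrable (μ := (volume : Measure E2))
    (f := fun _ => (1 : ℝ)) (g := fun y => T (ξ y) i) (v := EuclideanSpace.single i (1 : ℝ))
    (by simp) (by simpa using hint i)
    (by simpa using (hsm i).continuous.integrable_of_hasCompactSupport (hcs i))
    (fun _ _ => by fun_prop) (fun x _ => (hsm i).differentiable one_ne_zero x)
  simpa using this

theorem setIntegral_mul_divAlong (T : F →L[ℝ] E2) {Ω : Set E2} (hopen : IsOpen Ω) {v : E2 → ℝ}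
    (hv : ContDiffOn ℝ 1 v Ω) {ξ : E2 → F} (hξ : ContDiff ℝ 1 ξ) (hc : HasCompactSupport ξ)
    (hs : tsupport ξ ⊆ Ω) :
    ∫ x in Ω, v x * divAlong T ξ x = -∫ x in Ω, fderiv ℝ v x (T (ξ x)) := by
  set w : E2 → F := fun y => v y • ξ y
  have hws : tsupport w ⊆ tsupport ξ := closure_mono (Function.support_smul_subset_right _ _)
  have hwc : HasCompactSupport w := hc.mono' ((subset_tsupport w).trans hws)
  have hw : ContDiff ℝ 1 w := contDiff_of_contDiffOn_of_tsupport_subset hopen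
    (hv.smul hξ.contDiffOn) (hws.trans hs)
  have hvd : ∀ x ∈ Ω, DifferentiableAt ℝ v x := fun x hx =>
    (hv.contDiffAt (hopen.mem_nhds hx)).differentiableAt one_ne_zero
  have heq : ∀ x ∈ Ω, v x * divAlong T ξ x = divAlong T w x - fderiv ℝ v x (T (ξ x)) :=
    fun x hx => by
      rw [divAlong_smul T (hvd x hx) (hξ.differentiable one_ne_zero x), add_sub_cancel_right]
  have hi1 : Integrable (divAlong T w) :=
    (continuous_divAlong T hw).integrable_of_hasCompactSupport (hasCompactSupport_divAlong T hwc)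
  have hvξ : Integrable fun x => v x * divAlong T ξ x := by
    have hsup : tsupport (fun x => v x * divAlong T ξ x) ⊆ tsupport ξ :=
      closure_minimal (fun x hx => by
        by_contra hne
        exact hx (by simp [divAlong_eq_zero T hne])) (isClosed_tsupport _)
    refine Continuous.integrable_of_hasCompactSupport (contDiff_zero (𝕜 := ℝ).1
      (contDiff_of_contDiffOn_of_tsupport_subset hopen ?_ (hsup.trans hs)))
      (hc.mono' ((subset_tsupport _).trans hsup))
    exact contDiffOn_zero.2 (hv.continuousOn.mul (continuous_divAlong T hξ).continuousOn)
  rw [setIntegral_congr_fun hopen.measurableSet heq, integral_sub hi1.integrableOn,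
    setIntegral_eq_integral_of_forall_compl_eq_zero
      fun x hx => divAlong_eq_zero T fun h => hx (hs (hws h)),
    integral_divAlong_eq_zero T hw hwc, zero_sub]
  have : IntegrableOn (fun x => divAlong T w x - v x * divAlong T ξ x) Ω :=
    (hi1.sub hvξ).integrableOn
  refine this.congr_fun (fun x hx => ?_) hopen.measurableSet
  simp only [heq x hx, sub_sub_cancel]

end Divergence

section Variation

variable {F : Type} [NormedAddCommGroup F]

/-- `C¹` fields with compact support in `Ω` and values in the closed unit ball. -/
structure IsTestField [NormedSpace ℝ F] (Ω : Set E2) (ξ : E2 → F) : Prop where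
  contDiff : ContDiff ℝ 1 ξ
  hasCompactSupport : HasCompactSupport ξ
  tsupport_subset : tsupport ξ ⊆ Ω
  norm_le : ∀ x, ‖ξ x‖ ≤ 1

/-- Test values for the variation of `u` on `Ω` along `T`. -/
def varSetAlong [NormedSpace ℝ F] (T : F →L[ℝ] E2) (Ω : Set E2) (u : E2 → ℝ) : Set ℝ :=
  {v | ∃ ξ : E2 → F, IsTestField Ω ξ ∧ v = ∫ x in Ω, u x * divAlong T ξ x}

theorem zero_mem_varSetAlong [NormedSpace ℝ F] (T : F →L[ℝ] E2) (Ω : Set E2) (u : E2 → ℝ) :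
    0 ∈ varSetAlong T Ω u := by
  have hs : tsupport (fun _ : E2 => (0 : F)) = ∅ := tsupport_eq_empty_iff.2 rfl
  refine ⟨fun _ => 0, ⟨contDiff_const, HasCompactSupport.zero, ?_, by simp⟩, ?_⟩
  · rw [hs]; exact empty_subset _
  · simp_rw [fun x => divAlong_eq_zero T (ξ := fun _ : E2 => (0 : F)) (x := x) (by simp [hs])]
    simp

theorem IsTestField.setIntegral_le [NormedSpace ℝ F] {T : F →L[ℝ] E2} {Ω : Set E2}
    (hopen : IsOpen Ω) {v : E2 → ℝ} (hv : ContDiffOn ℝ 1 v Ω)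
    (hi : IntegrableOn (fun x => ‖fderiv ℝ v x ∘L T‖) Ω) {ξ : E2 → F} (hξ : IsTestField Ω ξ) :
    ∫ x in Ω, v x * divAlong T ξ x ≤ ∫ x in Ω, ‖fderiv ℝ v x ∘L T‖ := by
  rw [setIntegral_mul_divAlong T hopen hv hξ.contDiff hξ.hasCompactSupport hξ.tsupport_subset]
  refine (neg_le_abs _).trans ?_
  rw [← Real.norm_eq_abs]
  refine norm_integral_le_of_norm_le hi (Eventually.of_forall fun x => ?_)
  calc ‖fderiv ℝ v x (T (ξ x))‖ = ‖(fderiv ℝ v x ∘L T) (ξ x)‖ := rfl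
    _ ≤ ‖fderiv ℝ v x ∘L T‖ * ‖ξ x‖ := ContinuousLinearMap.le_opNorm _ _
    _ ≤ ‖fderiv ℝ v x ∘L T‖ * 1 := by gcongr; exact hξ.norm_le x
    _ = _ := mul_one _

theorem sub_le_sq_div_sqrt {a δ : ℝ} (ha : 0 ≤ a) (hδ : 0 < δ) :
    a - δ ≤ a ^ 2 / √(a ^ 2 + δ ^ 2) := by
  have hs : 0 < √(a ^ 2 + δ ^ 2) := Real.sqrt_pos.2 (by positivity)
  rw [le_div_iff₀ hs]
  have h1 : √(a ^ 2 + δ ^ 2) ≤ a + δ := Real.sqrt_le_iff.2 ⟨by positivity, by nlinarith⟩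
  rcases le_total a δ with h | h
  · nlinarith [sq_nonneg a]
  · nlinarith [mul_le_mul_of_nonneg_left h1 (sub_nonneg.2 h), sq_nonneg δ]

variable [InnerProductSpace ℝ F] [FiniteDimensional ℝ F]

variable (F) in
/-- The Riesz representative of a functional, as a linear map. -/
def rieszCLM : (F →L[ℝ] ℝ) →L[ℝ] F :=
  ∑ i, (ContinuousLinearMap.apply ℝ ℝ (stdOrthonormalBasis ℝ F i)).smulRight
    (stdOrthonormalBasis ℝ F i)

theorem inner_rieszCLM (p : F →L[ℝ] ℝ) (w : F) : inner ℝ (rieszCLM F p) w = p w := by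
  conv_rhs => rw [← (stdOrthonormalBasis ℝ F).sum_repr w]
  simp [rieszCLM, sum_inner, inner_smul_left, OrthonormalBasis.repr_apply_apply, mul_comm]

theorem apply_rieszCLM (p : F →L[ℝ] ℝ) : p (rieszCLM F p) = ‖rieszCLM F p‖ ^ 2 := by
  rw [← inner_rieszCLM, real_inner_self_eq_norm_sq]

theorem norm_le_norm_rieszCLM (p : F →L[ℝ] ℝ) : ‖p‖ ≤ ‖rieszCLM F p‖ := by
  refine p.opNorm_le_bound (norm_nonneg _) fun w => ?_
  rw [← inner_rieszCLM]
  exact norm_inner_le_norm _ _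

/-- The test field `-χ ∇v / √(|∇v|² + δ²)`, nearly optimal for the variation of `v`. -/
def optimalField (T : F →L[ℝ] E2) (v χ : E2 → ℝ) (δ : ℝ) (x : E2) : F :=
  χ x • (-(√(‖rieszCLM F (fderiv ℝ v x ∘L T)‖ ^ 2 + δ ^ 2))⁻¹ •
    rieszCLM F (fderiv ℝ v x ∘L T))

theorem isTestField_optimalField (T : F →L[ℝ] E2) {Ω : Set E2} (hopen : IsOpen Ω) {v χ : E2 → ℝ}
    (hv : ContDiffOn ℝ 2 v Ω) (hχ : ContDiff ℝ 1 χ) (hc : HasCompactSupport χ)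
    (hs : tsupport χ ⊆ Ω) (hr : ∀ x, χ x ∈ Icc (0 : ℝ) 1) {δ : ℝ} (hδ : 0 < δ) :
    IsTestField Ω (optimalField T v χ δ) := by
  have hsub : tsupport (optimalField T v χ δ) ⊆ tsupport χ :=
    closure_mono (Function.support_smul_subset_left _ _)
  refine ⟨?_, hc.mono' ((subset_tsupport _).trans hsub), hsub.trans hs, fun x => ?_⟩
  · refine contDiff_of_contDiffOn_of_tsupport_subset hopen ?_ (hsub.trans hs)
    have hG : ContDiffOn ℝ 1 (fun x => rieszCLM F (fderiv ℝ v x ∘L T)) Ω :=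
      (rieszCLM F).contDiff.comp_contDiffOn
        ((hv.fderiv_of_isOpen hopen (by norm_num)).clm_comp contDiffOn_const)
    have hpos : ∀ x, 0 < ‖rieszCLM F (fderiv ℝ v x ∘L T)‖ ^ 2 + δ ^ 2 := fun x => by positivity
    exact hχ.contDiffOn.smul ((((hG.norm_sq ℝ).add contDiffOn_const).sqrt
      fun x _ => (hpos x).ne').inv (fun x _ => (Real.sqrt_pos.2 (hpos x)).ne') |>.neg.smul hG)
  · set G := rieszCLM F (fderiv ℝ v x ∘L T) with hG
    have hsq : 0 < √(‖G‖ ^ 2 + δ ^ 2) := Real.sqrt_pos.2 (by positivity)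
    have hle : ‖G‖ ≤ √(‖G‖ ^ 2 + δ ^ 2) := Real.le_sqrt_of_sq_le (by nlinarith)
    rw [optimalField, ← hG, norm_smul, norm_smul, norm_neg, norm_inv, Real.norm_eq_abs,
      Real.norm_eq_abs, abs_of_nonneg (hr x).1, abs_of_pos hsq]
    calc χ x * ((√(‖G‖ ^ 2 + δ ^ 2))⁻¹ * ‖G‖) ≤ 1 * 1 := by
          refine mul_le_mul (hr x).2 ?_ (by positivity) zero_le_one
          rw [inv_mul_le_iff₀ hsq, mul_one]; exact hle
      _ = 1 := one_mul 1

theorem lintegral_norm_fderiv_comp_le (T : F →L[ℝ] E2) {Ω : Set E2} (hopen : IsOpen Ω)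
    (hbdd : Bornology.IsBounded Ω) {v : E2 → ℝ} (hv : ContDiffOn ℝ 2 v Ω) {M : ℝ}
    (hM : ∀ ξ : E2 → F, IsTestField Ω ξ → ∫ x in Ω, v x * divAlong T ξ x ≤ M) :
    ∫⁻ x in Ω, ENNReal.ofReal ‖fderiv ℝ v x ∘L T‖ ≤ ENNReal.ofReal M := by
  have hlt : ∀ j : ℕ, (1 / 2 : ℝ) ^ (j + 1) < (1 / 2) ^ j := fun j =>
    pow_lt_pow_right_of_lt_one₀ (by norm_num) (by norm_num) (Nat.lt_succ_self j)
  choose χ hsm hr h0 h1 using fun j : ℕ => exists_smooth_cutoff (Ω := Ω) (hlt j)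
  have hts : ∀ N, tsupport (χ N) ⊆ {x | (1 / 2 : ℝ) ^ (N + 1) ≤ infDist x Ωᶜ} := fun N =>
    closure_minimal (fun x hx => by
      by_contra hlt
      exact hx (h0 N x (not_le.1 hlt).le)) (isClosed_le continuous_const (continuous_infDist_pt _))
  have hcs : ∀ N, HasCompactSupport (χ N) := fun N =>
    (isCompact_le_infDist_compl hopen hbdd (by positivity)).of_isClosed_subset
      (isClosed_tsupport _) (hts N)
  have hsΩ : ∀ N, tsupport (χ N) ⊆ Ω := fun N x hx =>
    (infDist_compl_pos hopen hbdd).1 (lt_of_lt_of_le (by positivity) (hts N hx))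
  set δ : ℕ → ℝ := fun N => 1 / ((N : ℝ) + 1) with hδdef
  have hδ : ∀ N, 0 < δ N := fun N => by positivity
  have hD : ContinuousOn (fun x => fderiv ℝ v x ∘L T) Ω :=
    (hv.continuousOn_fderiv_of_isOpen hopen (by norm_num)).clm_comp continuousOn_const
  have hbound : ∀ N, ∫⁻ x in Ω, ENNReal.ofReal (χ N x * (‖fderiv ℝ v x ∘L T‖ - δ N)) ≤
      ENNReal.ofReal M := fun N => by
    set ξ := optimalField T v (χ N) (δ N)
    have hξ : IsTestField Ω ξ := isTestField_optimalField T hopen hv (hsm N 1) (hcs N) (hsΩ N)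
      (hr N) (hδ N)
    have hval : ∀ x, -fderiv ℝ v x (T (ξ x)) = χ N x *
        (‖rieszCLM F (fderiv ℝ v x ∘L T)‖ ^ 2 /
          √(‖rieszCLM F (fderiv ℝ v x ∘L T)‖ ^ 2 + δ N ^ 2)) := fun x => by
      have hp : fderiv ℝ v x (T (rieszCLM F (fderiv ℝ v x ∘L T))) =
          ‖rieszCLM F (fderiv ℝ v x ∘L T)‖ ^ 2 := apply_rieszCLM (fderiv ℝ v x ∘L T)
      simp only [ξ, optimalField, map_smul, smul_eq_mul, hp]
      ring
    have hnn : ∀ x, 0 ≤ -fderiv ℝ v x (T (ξ x)) := fun x => by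
      rw [hval]
      exact mul_nonneg (hr N x).1 (by positivity)
    have hsub : tsupport (fun x => -fderiv ℝ v x (T (ξ x))) ⊆ tsupport ξ :=
      closure_mono fun x hx => by
        by_contra hne
        exact hx (by simp [Function.notMem_support.1 hne])
    have hint : Integrable fun x => -fderiv ℝ v x (T (ξ x)) := by
      refine Continuous.integrable_of_hasCompactSupport (contDiff_zero (𝕜 := ℝ).1
        (contDiff_of_contDiffOn_of_tsupport_subset hopen ?_ (hsub.trans hξ.tsupport_subset)))
        (hξ.hasCompactSupport.mono' ((subset_tsupport _).trans hsub))
      exact contDiffOn_zero.2 (hD.clm_apply hξ.contDiff.continuous.continuousOn).neg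
    calc _ ≤ ∫⁻ x in Ω, ENNReal.ofReal (-fderiv ℝ v x (T (ξ x))) := by
          refine lintegral_mono fun x => ENNReal.ofReal_le_ofReal ?_
          rw [hval]
          refine mul_le_mul_of_nonneg_left ?_ (hr N x).1
          exact (sub_le_sub_right (norm_le_norm_rieszCLM _) _).trans
            (sub_le_sq_div_sqrt (norm_nonneg _) (hδ N))
      _ = ENNReal.ofReal (∫ x in Ω, -fderiv ℝ v x (T (ξ x))) :=
          (ofReal_integral_eq_lintegral_ofReal hint.integrableOn
            (Eventually.of_forall hnn)).symm
      _ ≤ ENNReal.ofReal M := by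
          refine ENNReal.ofReal_le_ofReal ?_
          rw [integral_neg, ← setIntegral_mul_divAlong T hopen (hv.of_le (by norm_num))
            hξ.contDiff hξ.hasCompactSupport hξ.tsupport_subset]
          exact hM ξ hξ
  have hlim : ∀ x ∈ Ω, Tendsto
      (fun N => ENNReal.ofReal (χ N x * (‖fderiv ℝ v x ∘L T‖ - δ N))) atTop
      (𝓝 (ENNReal.ofReal ‖fderiv ℝ v x ∘L T‖)) := fun x hx => by
    have hpos := (infDist_compl_pos hopen hbdd).2 hx
    have hχ1 : ∀ᶠ N in atTop, χ N x = 1 := by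
      have := (tendsto_pow_atTop_nhds_zero_of_lt_one (r := (1 / 2 : ℝ)) (by norm_num)
        (by norm_num)).eventually (gt_mem_nhds hpos)
      filter_upwards [this] with N hN using h1 N x hN.le
    refine (ENNReal.continuous_ofReal.tendsto _).comp ?_
    have h2 : Tendsto (fun N => ‖fderiv ℝ v x ∘L T‖ - δ N) atTop
        (𝓝 (‖fderiv ℝ v x ∘L T‖ - 0)) :=
      tendsto_const_nhds.sub tendsto_one_div_add_atTop_nhds_zero_nat
    rw [sub_zero] at h2
    refine h2.congr' ?_
    filter_upwards [hχ1] with N hN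
    rw [hN, one_mul]
  calc ∫⁻ x in Ω, ENNReal.ofReal ‖fderiv ℝ v x ∘L T‖
      = ∫⁻ x in Ω, liminf
          (fun N => ENNReal.ofReal (χ N x * (‖fderiv ℝ v x ∘L T‖ - δ N))) atTop :=
        setLIntegral_congr_fun hopen.measurableSet fun x hx => (hlim x hx).liminf_eq.symm
    _ ≤ liminf (fun N => ∫⁻ x in Ω,
          ENNReal.ofReal (χ N x * (‖fderiv ℝ v x ∘L T‖ - δ N))) atTop := by
        refine lintegral_liminf_le' fun N => ENNReal.measurable_ofReal.comp_aemeasurable ?_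
        exact ((hsm N 0).continuous.continuousOn.mul
          (hD.norm.sub continuousOn_const)).aemeasurable hopen.measurableSet
    _ ≤ ENNReal.ofReal M := liminf_le_of_frequently_le' (Frequently.of_forall hbound)

theorem tendsto_integral_norm_fderiv_comp (T : F →L[ℝ] E2) {Ω : Set E2} (hopen : IsOpen Ω)
    (hbdd : Bornology.IsBounded Ω) {u : E2 → ℝ} (hu : IntegrableOn u Ω)
    (hvar : BddAbove (varSetAlong T Ω u)) {v : ℕ → E2 → ℝ} (hv : ∀ n, ContDiffOn ℝ 2 (v n) Ω)
    (hvi : ∀ n, IntegrableOn (v n) Ω)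
    (hL1 : Tendsto (fun n => ∫ x in Ω, |v n x - u x|) atTop (𝓝 0))
    {ε : ℕ → ℝ} (hεnn : ∀ n, 0 ≤ ε n) (hε : Tendsto ε atTop (𝓝 0))
    (hle : ∀ n, ∀ ξ : E2 → F, IsTestField Ω ξ →
      ∫ x in Ω, v n x * divAlong T ξ x ≤ sSup (varSetAlong T Ω u) + ε n) :
    (∀ n, IntegrableOn (fun x => ‖fderiv ℝ (v n) x ∘L T‖) Ω) ∧
      Tendsto (fun n => ∫ x in Ω, ‖fderiv ℝ (v n) x ∘L T‖) atTop
        (𝓝 (sSup (varSetAlong T Ω u))) := by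
  set S := sSup (varSetAlong T Ω u)
  have hS : 0 ≤ S := le_csSup hvar (zero_mem_varSetAlong T Ω u)
  have hlin := fun n => lintegral_norm_fderiv_comp_le T hopen hbdd (hv n) (hle n)
  have hmeas : ∀ n, AEStronglyMeasurable (fun x => ‖fderiv ℝ (v n) x ∘L T‖)
      (volume.restrict Ω) := fun n =>
    (((hv n).continuousOn_fderiv_of_isOpen hopen (by norm_num)).clm_comp
      continuousOn_const).norm.aestronglyMeasurable hopen.measurableSet
  have hint : ∀ n, IntegrableOn (fun x => ‖fderiv ℝ (v n) x ∘L T‖) Ω := fun n => by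
    refine ⟨hmeas n, ?_⟩
    rw [hasFiniteIntegral_iff_ofReal (Eventually.of_forall fun _ => norm_nonneg _)]
    exact (hlin n).trans_lt ENNReal.ofReal_lt_top
  refine ⟨hint, tendsto_order.2 ⟨fun c hc => ?_, fun c hc => ?_⟩⟩
  · obtain ⟨_, ⟨ξ, hξ, rfl⟩, hcξ⟩ := exists_lt_of_lt_csSup ⟨0, zero_mem_varSetAlong T Ω u⟩ hc
    obtain ⟨C, hC⟩ := (hasCompactSupport_divAlong T
      hξ.hasCompactSupport).exists_bound_of_continuous (continuous_divAlong T hξ.contDiff)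
    have hmul : ∀ {f : E2 → ℝ}, IntegrableOn f Ω →
        IntegrableOn (fun x => f x * divAlong T ξ x) Ω := fun hf =>
      Integrable.mul_bdd (c := C) hf (continuous_divAlong T hξ.contDiff).aestronglyMeasurable
        (Eventually.of_forall hC)
    have hconv : Tendsto (fun n => ∫ x in Ω, v n x * divAlong T ξ x) atTop
        (𝓝 (∫ x in Ω, u x * divAlong T ξ x)) := by
      rw [tendsto_iff_dist_tendsto_zero]
      refine squeeze_zero (fun _ => dist_nonneg) (fun n => ?_)
        (by simpa using hL1.mul_const C)
      rw [dist_eq_norm, ← integral_sub (hmul (hvi n)) (hmul hu), ← integral_mul_const]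
      refine norm_integral_le_of_norm_le (((hvi n).sub hu).abs.mul_const C)
        (Eventually.of_forall fun x => ?_)
      rw [← sub_mul, norm_mul, Real.norm_eq_abs]
      exact mul_le_mul_of_nonneg_left (hC x) (abs_nonneg _)
    filter_upwards [hconv.eventually (lt_mem_nhds hcξ)] with n hn
    exact hn.trans_le (hξ.setIntegral_le hopen ((hv n).of_le (by norm_num)) (hint n))
  · have h1 : ∀ᶠ n in atTop, S + ε n < c := by
      have := hε.const_add S
      rw [add_zero] at this
      exact this.eventually (gt_mem_nhds hc)
    filter_upwards [h1] with n hn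
    refine lt_of_le_of_lt ?_ hn
    rw [integral_eq_lintegral_of_nonneg_ae (Eventually.of_forall fun _ => norm_nonneg _) (hmeas n)]
    exact ENNReal.toReal_le_of_le_ofReal (add_nonneg hS (hεnn n)) (hlin n)

end Variation

section Gluing

variable {Ω : Set E2} {ζ : ShellPartition Ω} {φ : ℕ → ContDiffBump (0 : E2)} {U : E2 → ℝ}

/-- The sum of the mollified pieces `η_j * (ζ_j U)`. -/
def glue (ζ : ShellPartition Ω) (φ : ℕ → ContDiffBump (0 : E2)) (U : E2 → ℝ) (x : E2) : ℝ :=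
  ∑' j, mollify (φ j) (fun y => ζ.toFun j y * U y) x

theorem half_pow_le_half_pow {m n : ℕ} (h : m ≤ n) : (1 / 2 : ℝ) ^ n ≤ (1 / 2) ^ m :=
  pow_le_pow_of_le_one (by norm_num) (by norm_num) h

theorem integrable_piece (ζ : ShellPartition Ω) (hopen : IsOpen Ω) (hbdd : Bornology.IsBounded Ω)
    (hU : Integrable U) (j : ℕ) : Integrable fun y => ζ.toFun j y * U y := by
  obtain ⟨C, hC⟩ := (ζ.hasCompactSupport hopen hbdd j).exists_bound_of_continuous
    (ζ.contDiff j 0).continuous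
  exact hU.bdd_mul (c := C) (ζ.contDiff j 0).continuous.aestronglyMeasurable
    (Eventually.of_forall hC)

theorem integrable_smul_fderiv (ζ : ShellPartition Ω) (hopen : IsOpen Ω)
    (hbdd : Bornology.IsBounded Ω) (hU : Integrable U) (j : ℕ) :
    Integrable fun y => U y • fderiv ℝ (ζ.toFun j) y := by
  have hcont := (ζ.contDiff j 1).continuous_fderiv (by simp)
  obtain ⟨C, hC⟩ := ((ζ.hasCompactSupport hopen hbdd j).fderiv ℝ).exists_bound_of_continuous hcont
  exact hU.smul_bdd C hcont.aestronglyMeasurable (Eventually.of_forall hC)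

theorem mollify_piece_lower (hφ : ∀ j, (φ j).rOut ≤ (1 / 2) ^ (j + 2)) {j : ℕ} {x : E2}
    (hx : mollify (φ j) (fun y => ζ.toFun j y * U y) x ≠ 0) :
    (1 / 2 : ℝ) ^ (j + 2) < infDist x Ωᶜ := by
  obtain ⟨y, hxy, hy⟩ := exists_ne_zero_of_mollify_ne_zero _ hx
  have h1 := ζ.lower j y (left_ne_zero_of_mul hy)
  have h2 := infDist_le_infDist_add_dist (s := Ωᶜ) (x := y) (y := x)
  rw [dist_comm] at h2
  have h3 : (1 / 2 : ℝ) ^ (j + 1) = 2 * (1 / 2) ^ (j + 2) := by ring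
  linarith [hφ j]

theorem mollify_piece_eq_zero (hφ : ∀ j, (φ j).rOut ≤ (1 / 2) ^ (j + 2)) {j N : ℕ} {x : E2}
    (hx : (1 / 2 : ℝ) ^ N ≤ infDist x Ωᶜ) (hj : N + 2 ≤ j) :
    mollify (φ j) (fun y => ζ.toFun j y * U y) x = 0 := by
  obtain ⟨k, rfl⟩ : ∃ k, j = k + 1 := ⟨j - 1, by omega⟩
  by_contra hne
  obtain ⟨y, hxy, hy⟩ := exists_ne_zero_of_mollify_ne_zero _ hne
  have h1 := ζ.upper k y (left_ne_zero_of_mul hy)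
  have h2 := infDist_le_infDist_add_dist (s := Ωᶜ) (x := x) (y := y)
  have h3 : (1 / 2 : ℝ) ^ (k + 1 + 2) ≤ (1 / 2) ^ k := half_pow_le_half_pow (by omega)
  have h4 : (1 / 2 : ℝ) ^ k ≤ (1 / 2) ^ (N + 1) := half_pow_le_half_pow (by omega)
  have h5 : (1 / 2 : ℝ) ^ N = 2 * (1 / 2) ^ (N + 1) := by ring
  linarith [hφ (k + 1)]

theorem glue_eq_sum (hφ : ∀ j, (φ j).rOut ≤ (1 / 2) ^ (j + 2)) {N : ℕ} {x : E2}
    (hx : (1 / 2 : ℝ) ^ N ≤ infDist x Ωᶜ) :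
    glue ζ φ U x =
      ∑ j ∈ Finset.range (N + 2), mollify (φ j) (fun y => ζ.toFun j y * U y) x :=
  tsum_eq_sum fun j hj => mollify_piece_eq_zero hφ hx (by simpa using hj)

theorem exists_half_pow_lt_infDist (hopen : IsOpen Ω) (hbdd : Bornology.IsBounded Ω) {K : Set E2}
    (hK : IsCompact K) (hsub : K ⊆ Ω) : ∃ N : ℕ, ∀ x ∈ K, (1 / 2 : ℝ) ^ N < infDist x Ωᶜ := by
  rcases K.eq_empty_or_nonempty with rfl | hne
  · exact ⟨0, by simp⟩
  obtain ⟨x₀, hx₀, hmin⟩ := hK.exists_isMinOn hne (continuous_infDist_pt Ωᶜ).continuousOn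
  obtain ⟨N, hN⟩ := exists_pow_lt_of_lt_one ((infDist_compl_pos hopen hbdd).2 (hsub hx₀))
    (show (1 / 2 : ℝ) < 1 by norm_num)
  exact ⟨N, fun x hx => hN.trans_le (hmin hx)⟩

theorem contDiffOn_glue (hopen : IsOpen Ω) (hbdd : Bornology.IsBounded Ω) (hU : Integrable U)
    (hφ : ∀ j, (φ j).rOut ≤ (1 / 2) ^ (j + 2)) : ContDiffOn ℝ 2 (glue ζ φ U) Ω := by
  intro x hx
  obtain ⟨N, hN⟩ := exists_half_pow_lt_infDist hopen hbdd isCompact_singleton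
    (singleton_subset_iff.2 hx)
  have hsum : ContDiff ℝ 2 fun x =>
      ∑ j ∈ Finset.range (N + 2), mollify (φ j) (fun y => ζ.toFun j y * U y) x :=
    ContDiff.sum fun j _ =>
      contDiff_mollify _ (integrable_piece ζ hopen hbdd hU j).locallyIntegrable 2
  refine (hsum.contDiffAt.congr_of_eventuallyEq ?_).contDiffWithinAt
  filter_upwards [(continuous_infDist_pt Ωᶜ).continuousAt.eventually
    (lt_mem_nhds (hN x rfl))] with y hy using glue_eq_sum hφ hy.le

theorem lintegral_enorm_glue_sub_le (hopen : IsOpen Ω) (hbdd : Bornology.IsBounded Ω)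
    (hU : Integrable U) (hφ : ∀ j, (φ j).rOut ≤ (1 / 2) ^ (j + 2)) {A : Set E2} (hA : A ⊆ Ω)
    (hAm : MeasurableSet A) {c : ℝ} (hc : 0 ≤ c)
    (hb : ∀ j, ∫⁻ x in A,
      ‖mollify (φ j) (fun y => ζ.toFun j y * U y) x - ζ.toFun j x * U x‖ₑ ≤
        ENNReal.ofReal (c * (1 / 2) ^ j)) :
    ∫⁻ x in A, ‖glue ζ φ U x - U x‖ₑ ≤ ENNReal.ofReal (c * 2) := by
  have hpt : ∀ x ∈ A, ‖glue ζ φ U x - U x‖ₑ ≤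
      ∑' j, ‖mollify (φ j) (fun y => ζ.toFun j y * U y) x - ζ.toFun j x * U x‖ₑ := fun x hx => by
    obtain ⟨N, hN⟩ := exists_half_pow_lt_infDist hopen hbdd isCompact_singleton
      (singleton_subset_iff.2 (hA hx))
    have h1 := ζ.sum_eq_one (N + 1) x
      ((half_pow_le_half_pow (Nat.le_succ N)).trans (hN x rfl).le)
    have h2 : glue ζ φ U x - U x = ∑ j ∈ Finset.range (N + 2),
        (mollify (φ j) (fun y => ζ.toFun j y * U y) x - ζ.toFun j x * U x) := by
      rw [glue_eq_sum hφ (hN x rfl).le, Finset.sum_sub_distrib, ← Finset.sum_mul, h1, one_mul]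
    rw [h2]
    exact (enorm_sum_le _ _).trans (ENNReal.sum_le_tsum _)
  calc _ ≤ ∫⁻ x in A, ∑' j,
        ‖mollify (φ j) (fun y => ζ.toFun j y * U y) x - ζ.toFun j x * U x‖ₑ :=
        setLIntegral_mono' hAm hpt
    _ = ∑' j, ∫⁻ x in A,
        ‖mollify (φ j) (fun y => ζ.toFun j y * U y) x - ζ.toFun j x * U x‖ₑ :=
        lintegral_tsum fun j => (((integrable_mollify _
          (integrable_piece ζ hopen hbdd hU j)).sub
          (integrable_piece ζ hopen hbdd hU j)).aestronglyMeasurable.enorm).restrict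
    _ ≤ ∑' j : ℕ, ENNReal.ofReal (c * (1 / 2) ^ j) := ENNReal.tsum_le_tsum hb
    _ = ENNReal.ofReal (c * 2) := by
        rw [← ENNReal.ofReal_tsum_of_nonneg (fun j => by positivity)
          (summable_geometric_two.mul_left c), tsum_mul_left, tsum_geometric_two]

variable {F : Type} [NormedAddCommGroup F] [NormedSpace ℝ F]

/-- The field tested against `U` when the glued function is tested against `ξ`. -/
def glueField (ζ : ShellPartition Ω) (φ : ℕ → ContDiffBump (0 : E2)) (N : ℕ) (ξ : E2 → F)
    (x : E2) : F :=
  ∑ j ∈ Finset.range N, ζ.toFun j x • mollify (φ j) ξ x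

theorem isTestField_glueField (hopen : IsOpen Ω) (hbdd : Bornology.IsBounded Ω) {ξ : E2 → F}
    (hξ : IsTestField Ω ξ) (N : ℕ) : IsTestField Ω (glueField ζ φ N ξ) := by
  have hts : tsupport (glueField ζ φ N ξ) ⊆ {x | (1 / 2 : ℝ) ^ N ≤ infDist x Ωᶜ} := by
    refine closure_minimal (fun x hx => ?_)
      (isClosed_le continuous_const (continuous_infDist_pt _))
    obtain ⟨j, hj, hne⟩ := Finset.exists_ne_zero_of_sum_ne_zero hx
    exact (half_pow_le_half_pow (Finset.mem_range.1 hj)).trans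
      (ζ.lower j x (left_ne_zero_of_smul hne)).le
  refine ⟨?_, ?_, ?_, fun x => ?_⟩
  · exact ContDiff.sum fun j _ => (ζ.contDiff j 1).smul (contDiff_mollify _
      (hξ.contDiff.continuous.integrable_of_hasCompactSupport
        hξ.hasCompactSupport).locallyIntegrable 1)
  · exact (isCompact_le_infDist_compl hopen hbdd (by positivity)).of_isClosed_subset
      (isClosed_tsupport _) hts
  · exact hts.trans fun x hx =>
      (infDist_compl_pos hopen hbdd).1 (lt_of_lt_of_le (by positivity) (mem_ofPred.1 hx))
  · refine (norm_sum_le _ _).trans (le_trans (Finset.sum_le_sum fun j _ => ?_)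
      (ζ.sum_le_one N x))
    rw [norm_smul, Real.norm_eq_abs, abs_of_nonneg (ζ.nonneg j x)]
    exact mul_le_of_le_one_right (ζ.nonneg j x) (norm_mollify_le _ hξ.norm_le x)

theorem integral_mollify_piece_mul_divAlong [CompleteSpace F] (T : F →L[ℝ] E2)
    (hopen : IsOpen Ω) (hbdd : Bornology.IsBounded Ω) (hU : Integrable U) {ξ : E2 → F}
    (hξ : IsTestField Ω ξ) (j : ℕ) :
    ∫ x, mollify (φ j) (fun y => ζ.toFun j y * U y) x * divAlong T ξ x =
      (∫ x, U x * divAlong T (fun y => ζ.toFun j y • mollify (φ j) ξ y) x) -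
        ∫ x, mollify (φ j) (fun y => U y • fderiv ℝ (ζ.toFun j) y) x (T (ξ x)) := by
  have hξi := hξ.contDiff.continuous.integrable_of_hasCompactSupport (μ := volume)
    hξ.hasCompactSupport
  have hdc := continuous_divAlong T hξ.contDiff
  have hdi := hdc.integrable_of_hasCompactSupport (μ := volume)
    (hasCompactSupport_divAlong T hξ.hasCompactSupport)
  have hm : ContDiff ℝ 1 (mollify (φ j) ξ) :=
    contDiff_mollify _ hξi.locallyIntegrable 1
  have hζ : ContDiff ℝ 1 (ζ.toFun j) := ζ.contDiff j 1
  have h1 := integral_mollify_pairing (φ j) (ContinuousLinearMap.mul ℝ ℝ)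
    (integrable_piece ζ hopen hbdd hU j) hdi
  have h2 := integral_mollify_pairing (φ j) ((ContinuousLinearMap.compL ℝ F E2 ℝ).flip T)
    (integrable_smul_fderiv ζ hopen hbdd hU j) hξi
  simp only [ContinuousLinearMap.mul_apply', ContinuousLinearMap.flip_apply,
    ContinuousLinearMap.compL_apply, ContinuousLinearMap.comp_apply] at h1 h2
  rw [h1, h2]
  have hprod : ContDiff ℝ 1 fun y => ζ.toFun j y • mollify (φ j) ξ y := hζ.smul hm
  have hprodc : HasCompactSupport fun y => ζ.toFun j y • mollify (φ j) ξ y :=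
    (ζ.hasCompactSupport hopen hbdd j).smul_right
  obtain ⟨C, hC⟩ := (hasCompactSupport_divAlong T hprodc).exists_bound_of_continuous
    (continuous_divAlong T hprod)
  obtain ⟨C', hC'⟩ := (show HasCompactSupport fun x =>
    fderiv ℝ (ζ.toFun j) x (T (mollify (φ j) ξ x)) from
      ((ζ.hasCompactSupport hopen hbdd j).fderiv ℝ).mono fun x hx hne => hx (by simp [hne])
    ).exists_bound_of_continuous ((hζ.continuous_fderiv one_ne_zero).clm_apply
      (T.continuous.comp hm.continuous))
  rw [← integral_sub]
  · refine integral_congr_ae (Eventually.of_forall fun x => ?_)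
    dsimp only
    rw [divAlong_smul T (hζ.differentiable one_ne_zero x) (hm.differentiable one_ne_zero x),
      divAlong_mollify T (φ j) hξ.contDiff hξ.hasCompactSupport]
    simp
    ring
  · exact hU.mul_bdd (c := C) (continuous_divAlong T hprod).aestronglyMeasurable
      (Eventually.of_forall hC)
  · simp only [smul_apply, smul_eq_mul]
    exact hU.mul_bdd (c := C') ((hζ.continuous_fderiv one_ne_zero).clm_apply
      (T.continuous.comp hm.continuous)).aestronglyMeasurable (Eventually.of_forall hC')

theorem exists_testField_glue_le [CompleteSpace F] (T : F →L[ℝ] E2) (hT : ‖T‖ ≤ 1)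
    (hopen : IsOpen Ω) (hbdd : Bornology.IsBounded Ω) (hU : Integrable U)
    (hφ : ∀ j, (φ j).rOut ≤ (1 / 2) ^ (j + 2)) {c : ℝ}
    (hb : ∀ j, ∫ x, ‖mollify (φ j) (fun y => U y • fderiv ℝ (ζ.toFun j) y) x -
      U x • fderiv ℝ (ζ.toFun j) x‖ ≤ c * (1 / 2) ^ j)
    {ξ : E2 → F} (hξ : IsTestField Ω ξ) :
    ∃ ψ : E2 → F, IsTestField Ω ψ ∧
      ∫ x in Ω, glue ζ φ U x * divAlong T ξ x ≤ (∫ x in Ω, U x * divAlong T ψ x) + c * 2 := by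
  have hc : 0 ≤ c := by
    have := (integral_nonneg fun x => norm_nonneg _).trans (hb 0)
    simpa using this
  obtain ⟨N, hN⟩ := exists_half_pow_lt_infDist hopen hbdd hξ.hasCompactSupport.isCompact
    hξ.tsupport_subset
  set s := Finset.range (N + 2) with hs
  have hψ : IsTestField Ω (glueField ζ φ (N + 2) ξ) := isTestField_glueField hopen hbdd hξ _
  refine ⟨_, hψ, ?_⟩
  have hξi := hξ.contDiff.continuous.integrable_of_hasCompactSupport (μ := volume)
    hξ.hasCompactSupport
  have hdc := continuous_divAlong T hξ.contDiff
  obtain ⟨Cd, hCd⟩ := (hasCompactSupport_divAlong T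
    hξ.hasCompactSupport).exists_bound_of_continuous hdc
  have hTξ : Continuous fun x => T (ξ x) := T.continuous.comp hξ.contDiff.continuous
  have hTle : ∀ x, ‖T (ξ x)‖ ≤ 1 := fun x =>
    (T.le_of_opNorm_le hT _).trans (by simpa using hξ.norm_le x)
  have happ : ∀ {G : E2 → E2 →L[ℝ] ℝ}, Integrable G → Integrable fun x => G x (T (ξ x)) :=
    fun {G} hG => by
      refine hG.norm.mono' ?_ (Eventually.of_forall fun x => ?_)
      · exact (show Continuous fun q : (E2 →L[ℝ] ℝ) × E2 => q.1 q.2 by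
          fun_prop).comp_aestronglyMeasurable (hG.1.prodMk hTξ.aestronglyMeasurable)
      · exact (G x).le_of_opNorm_le_of_le le_rfl (hTle x) |>.trans_eq (mul_one _)
  set G : ℕ → E2 → E2 →L[ℝ] ℝ := fun j x => U x • fderiv ℝ (ζ.toFun j) x with hG
  have hGi : ∀ j, Integrable (G j) := integrable_smul_fderiv ζ hopen hbdd hU
  have hfi : ∀ j, Integrable
      fun x => mollify (φ j) (fun y => ζ.toFun j y * U y) x * divAlong T ξ x := fun j =>
    (integrable_mollify _ (integrable_piece ζ hopen hbdd hU j)).mul_bdd (c := Cd)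
      hdc.aestronglyMeasurable (Eventually.of_forall hCd)
  have hm : ∀ j, ContDiff ℝ 1 fun y => ζ.toFun j y • mollify (φ j) ξ y := fun j =>
    (ζ.contDiff j 1).smul (contDiff_mollify _ hξi.locallyIntegrable 1)
  have hUi : ∀ j, Integrable
      fun x => U x * divAlong T (fun y => ζ.toFun j y • mollify (φ j) ξ y) x := fun j => by
    obtain ⟨C, hC⟩ := (hasCompactSupport_divAlong T
      ((ζ.hasCompactSupport hopen hbdd j).smul_right
        (f' := mollify (φ j) ξ))).exists_bound_of_continuous (continuous_divAlong T (hm j))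
    exact hU.mul_bdd (c := C) (continuous_divAlong T (hm j)).aestronglyMeasurable
      (Eventually.of_forall hC)
  have hleft : ∫ x in Ω, glue ζ φ U x * divAlong T ξ x =
      ∑ j ∈ s, ∫ x, mollify (φ j) (fun y => ζ.toFun j y * U y) x * divAlong T ξ x := by
    rw [setIntegral_eq_integral_of_forall_compl_eq_zero fun x hx => by
      rw [divAlong_eq_zero T fun h => hx (hξ.tsupport_subset h), mul_zero],
      ← integral_finsetSum _ fun j _ => hfi j]
    refine integral_congr_ae (Eventually.of_forall fun x => ?_)
    dsimp only
    by_cases hx : x ∈ tsupport ξ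
    · rw [glue_eq_sum hφ (hN x hx).le, Finset.sum_mul]
    · simp [divAlong_eq_zero T hx]
  have hright : ∫ x in Ω, U x * divAlong T (glueField ζ φ (N + 2) ξ) x =
      ∑ j ∈ s, ∫ x, U x * divAlong T (fun y => ζ.toFun j y • mollify (φ j) ξ y) x := by
    rw [setIntegral_eq_integral_of_forall_compl_eq_zero fun x hx => by
      rw [divAlong_eq_zero T fun h => hx (hψ.tsupport_subset h), mul_zero],
      ← integral_finsetSum _ fun j _ => hUi j]
    refine integral_congr_ae (Eventually.of_forall fun x => ?_)
    dsimp only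
    rw [← Finset.mul_sum, ← divAlong_sum T _ fun j _ => (hm j).differentiable one_ne_zero x]
    rfl
  have hcancel : ∑ j ∈ s, ∫ x, G j x (T (ξ x)) = 0 := by
    rw [← integral_finsetSum _ fun j _ => happ (hGi j)]
    refine integral_eq_zero_of_ae (Eventually.of_forall fun x => ?_)
    by_cases hx : x ∈ tsupport ξ
    · have hsum : ∑ j ∈ s, fderiv ℝ (ζ.toFun j) x = 0 := by
        rw [← fderiv_fun_sum fun j _ => (ζ.contDiff j 1).differentiable (by simp) x]
        have heq : (fun y => ∑ j ∈ s, ζ.toFun j y) =ᶠ[𝓝 x] fun _ => 1 := by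
          filter_upwards [(continuous_infDist_pt Ωᶜ).continuousAt.eventually
            (lt_mem_nhds (hN x hx))] with y hy
          exact ζ.sum_eq_one (N + 1) y ((half_pow_le_half_pow (Nat.le_succ N)).trans hy.le)
        rw [heq.fderiv_eq, fderiv_fun_const]
        rfl
      have := congrArg (fun p : E2 →L[ℝ] ℝ => U x * p (T (ξ x))) hsum
      simpa [hG, Finset.mul_sum] using this
    · simp [image_eq_zero_of_notMem_tsupport hx]
  have herr : ∀ j, -(∫ x, mollify (φ j) (G j) x (T (ξ x))) + ∫ x, G j x (T (ξ x)) ≤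
      c * (1 / 2) ^ j := fun j => by
    have hmi := integrable_mollify (φ j) (hGi j)
    rw [neg_add_eq_sub, ← neg_sub, ← integral_sub (happ hmi) (happ (hGi j))]
    refine (neg_le_abs _).trans (le_trans ?_ (hb j))
    rw [← Real.norm_eq_abs]
    refine norm_integral_le_of_norm_le (hmi.sub (hGi j)).norm (Eventually.of_forall fun x => ?_)
    rw [← sub_apply]
    exact ((mollify (φ j) (G j) x - G j x).le_of_opNorm_le_of_le le_rfl (hTle x)).trans_eq
      (mul_one _)
  have hgeom : ∑ j ∈ s, c * (1 / 2 : ℝ) ^ j ≤ c * 2 := by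
    rw [← Finset.mul_sum]
    refine mul_le_mul_of_nonneg_left ?_ hc
    exact (summable_geometric_two.sum_le_tsum _ fun j _ => by positivity).trans_eq
      tsum_geometric_two
  have hsumerr := (Finset.sum_le_sum fun j (_ : j ∈ s) => herr j).trans hgeom
  rw [Finset.sum_add_distrib, hcancel, add_zero] at hsumerr
  rw [hleft, hright, Finset.sum_congr rfl fun j _ =>
    integral_mollify_piece_mul_divAlong T hopen hbdd hU hξ j, Finset.sum_sub_distrib]
  rw [Finset.sum_neg_distrib] at hsumerr
  linarith

end Gluing

section Approximation

theorem exists_measureReal_ball_inter_ge {Ω : Set E2} (hopen : IsOpen Ω)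
    (hbdd : Bornology.IsBounded Ω) {r : ℝ} (hr : 0 < r) :
    ∃ m : ℝ, 0 < m ∧ m ≤ 1 ∧ ∀ x ∈ frontier Ω, m ≤ volume.real (ball x r ∩ Ω) := by
  have hK : IsCompact (frontier Ω) :=
    isCompact_of_isClosed_isBounded isClosed_frontier
      (hbdd.closure.subset frontier_subset_closure)
  obtain ⟨t, htK, hcov⟩ := hK.elim_nhds_subcover (fun x => ball x (r / 2))
    fun x _ => ball_mem_nhds x (half_pos hr)
  have hfin : ∀ s : Set E2, volume (s ∩ Ω) ≠ ⊤ := fun s =>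
    (hbdd.subset inter_subset_right).measure_lt_top.ne
  have hpos : ∀ x ∈ frontier Ω, 0 < volume.real (ball x (r / 2) ∩ Ω) := fun x hx => by
    refine ENNReal.toReal_pos ?_ (hfin _)
    refine ((isOpen_ball.inter hopen).measure_pos volume ?_).ne'
    exact mem_closure_iff.1 (frontier_subset_closure hx) _ isOpen_ball
      (mem_ball_self (half_pos hr))
  obtain ⟨m, hm0, hm⟩ : ∃ m : ℝ, 0 < m ∧ ∀ x ∈ t, m ≤ volume.real (ball x (r / 2) ∩ Ω) := by
    rcases t.eq_empty_or_nonempty with rfl | hne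
    · exact ⟨1, one_pos, by simp⟩
    · obtain ⟨x₀, hx₀, hmin⟩ := t.exists_min_image
        (fun x => volume.real (ball x (r / 2) ∩ Ω)) hne
      exact ⟨_, hpos x₀ (htK x₀ hx₀), hmin⟩
  refine ⟨min m 1, lt_min hm0 one_pos, min_le_right _ _, fun x hx => ?_⟩
  obtain ⟨y, hy, hxy⟩ := mem_iUnion₂.1 (hcov hx)
  refine (min_le_left _ _).trans ((hm y hy).trans (measureReal_mono ?_ (hfin _)))
  refine inter_subset_inter_left _ (ball_subset_ball' ?_)
  rw [dist_comm]
  linarith [mem_ball.1 hxy]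

theorem setAverage_le_of_lintegral_le {A : Set E2} {f : E2 → ℝ} {c : ℝ} (hc : 0 ≤ c)
    (hf : AEStronglyMeasurable f (volume.restrict A))
    (h : ∫⁻ x in A, ‖f x‖ₑ ≤ ENNReal.ofReal (c * volume.real A)) :
    ⨍ x in A, |f x| ≤ c := by
  have hle : ∫ x in A, |f x| ≤ c * volume.real A := by
    simp_rw [← Real.norm_eq_abs]
    rw [integral_norm_eq_lintegral_enorm hf]
    exact ENNReal.toReal_le_of_le_ofReal (by positivity) h
  rw [setAverage_eq, smul_eq_mul, inv_mul_eq_div]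
  exact div_le_of_le_mul₀ measureReal_nonneg hc hle

theorem exists_mollifier_le {V : Type} [NormedAddCommGroup V] [NormedSpace ℝ V] [CompleteSpace V]
    {f : E2 → ℝ} {g : E2 → V} (hf : Integrable f) (hg : Integrable g) {r δ : ℝ} (hr : 0 < r)
    (hδ : 0 < δ) :
    ∃ φ : ContDiffBump (0 : E2), φ.rOut ≤ r ∧ ∫ x, ‖mollify φ f x - f x‖ ≤ δ ∧
      ∫ x, ‖mollify φ g x - g x‖ ≤ δ := by
  obtain ⟨ρ₁, h₁, hρ₁⟩ := exists_integral_norm_mollify_sub_le hf hδ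
  obtain ⟨ρ₂, h₂, hρ₂⟩ := exists_integral_norm_mollify_sub_le hg hδ
  have hρ : 0 < min r (min ρ₁ ρ₂) := lt_min hr (lt_min h₁ h₂)
  let φ : ContDiffBump (0 : E2) := ⟨min r (min ρ₁ ρ₂) / 2, min r (min ρ₁ ρ₂), half_pos hρ,
    half_lt_self hρ⟩
  exact ⟨φ, min_le_left _ _, hρ₁ φ ((min_le_right _ _).trans (min_le_left _ _)),
    hρ₂ φ ((min_le_right _ _).trans (min_le_right _ _))⟩

theorem exists_smooth_approx {Ω : Set E2} (hopen : IsOpen Ω) (hbdd : Bornology.IsBounded Ω)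
    {u : E2 → ℝ} (hu : IntegrableOn u Ω) {ε : ℝ} (hε : 0 < ε) :
    ∃ v : E2 → ℝ, ContDiffOn ℝ 2 v Ω ∧ IntegrableOn v Ω ∧ ∫ x in Ω, |v x - u x| ≤ ε ∧
      (∀ x ∈ frontier Ω,
        Tendsto (fun r => ⨍ y in ball x r ∩ Ω, |v y - u y|) (𝓝[>] (0 : ℝ)) (𝓝 0)) ∧
      ∀ (F : Type) [NormedAddCommGroup F] [NormedSpace ℝ F] [CompleteSpace F] (T : F →L[ℝ] E2),
        ‖T‖ ≤ 1 → ∀ ξ : E2 → F, IsTestField Ω ξ → ∃ ψ : E2 → F, IsTestField Ω ψ ∧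
          ∫ x in Ω, v x * divAlong T ξ x ≤ (∫ x in Ω, u x * divAlong T ψ x) + ε := by
  have hΩm := hopen.measurableSet
  set U : E2 → ℝ := Ω.indicator u with hUdef
  have hU : Integrable U := (integrable_indicator_iff hΩm).2 hu
  have hUu : ∀ x ∈ Ω, U x = u x := fun x hx => indicator_of_mem hx u
  obtain ⟨ζ⟩ := nonempty_shellPartition Ω
  choose m hm0 hm1 hm using fun j : ℕ => exists_measureReal_ball_inter_ge hopen hbdd
    (r := (1 / 2 : ℝ) ^ (j + 2)) (by positivity)
  choose φ hφ hb1 hb2 using fun j : ℕ => exists_mollifier_le (integrable_piece ζ hopen hbdd hU j)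
    (integrable_smul_fderiv ζ hopen hbdd hU j) (r := (1 / 2 : ℝ) ^ (j + 2))
    (δ := ε / 4 * (1 / 4) ^ j * m j) (by positivity) (by have := hm0 j; positivity)
  have hδ : ∀ j, ε / 4 * (1 / 4) ^ j * m j ≤ ε / 4 * (1 / 2) ^ j := fun j => by
    refine (mul_le_of_le_one_right (by positivity) (hm1 j)).trans ?_
    gcongr
    norm_num
  have hsub : ∀ j, Integrable fun x =>
      mollify (φ j) (fun y => ζ.toFun j y * U y) x - ζ.toFun j x * U x := fun j =>
    (integrable_mollify _ (integrable_piece ζ hopen hbdd hU j)).sub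
      (integrable_piece ζ hopen hbdd hU j)
  have hlin : ∀ j (A : Set E2), ∫⁻ x in A,
      ‖mollify (φ j) (fun y => ζ.toFun j y * U y) x - ζ.toFun j x * U x‖ₑ ≤
        ENNReal.ofReal (ε / 4 * (1 / 4) ^ j * m j) := fun j A => by
    refine (setLIntegral_le_lintegral _ _).trans ?_
    rw [← ofReal_integral_norm_eq_lintegral_enorm (hsub j)]
    exact ENNReal.ofReal_le_ofReal (hb1 j)
  have hv : ContDiffOn ℝ 2 (glue ζ φ U) Ω := contDiffOn_glue hopen hbdd hU hφ
  have hdm : AEStronglyMeasurable (fun x => glue ζ φ U x - U x) (volume.restrict Ω) :=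
    (hv.continuousOn.aestronglyMeasurable hΩm).sub hU.aestronglyMeasurable.restrict
  have hΩerr := lintegral_enorm_glue_sub_le hopen hbdd hU hφ subset_rfl hΩm (c := ε / 4)
    (by positivity) fun j => (hlin j Ω).trans (ENNReal.ofReal_le_ofReal (hδ j))
  have hdi : IntegrableOn (fun x => glue ζ φ U x - U x) Ω :=
    ⟨hdm, hΩerr.trans_lt ENNReal.ofReal_lt_top⟩
  refine ⟨glue ζ φ U, hv, ?_, ?_, fun x hx => ?_, ?_⟩
  · exact (hdi.add hU.integrableOn).congr_fun (fun x _ => by simp) hΩm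
  · rw [setIntegral_congr_fun hΩm (g := fun x => ‖glue ζ φ U x - U x‖)
      fun x hx => by simp [hUu x hx], integral_norm_eq_lintegral_enorm hdm]
    refine ENNReal.toReal_le_of_le_ofReal hε.le (hΩerr.trans (ENNReal.ofReal_le_ofReal ?_))
    linarith
  · have hxc : x ∈ Ωᶜ := by
      rw [hopen.frontier_eq] at hx
      exact hx.2
    have hkey : ∀ r : ℝ, 0 < r → ⨍ y in ball x r ∩ Ω, |glue ζ φ U y - u y| ≤ ε * r * 2 := by
      intro r hr
      have hAm : MeasurableSet (ball x r ∩ Ω) := measurableSet_ball.inter hΩm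
      have hAfin : volume (ball x r ∩ Ω) ≠ ⊤ := (hbdd.subset inter_subset_right).measure_lt_top.ne
      have hcongr : ⨍ y in ball x r ∩ Ω, |glue ζ φ U y - u y| =
          ⨍ y in ball x r ∩ Ω, |glue ζ φ U y - U y| := by
        rw [setAverage_eq, setAverage_eq, setIntegral_congr_fun hAm
          (g := fun y => |glue ζ φ U y - U y|) fun y hy => by simp only [hUu y hy.2]]
      rw [hcongr]
      refine setAverage_le_of_lintegral_le (by positivity)
        (hdm.mono_measure (Measure.restrict_mono inter_subset_right le_rfl)) ?_
      refine (lintegral_enorm_glue_sub_le hopen hbdd hU hφ inter_subset_right hAm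
        (c := ε * r * volume.real (ball x r ∩ Ω)) (by positivity) fun j => ?_).trans_eq
          (congrArg _ (by ring))
      by_cases hj : (1 / 2 : ℝ) ^ (j + 2) < r
      · refine (hlin j _).trans (ENNReal.ofReal_le_ofReal ?_)
        have h1 : m j ≤ volume.real (ball x r ∩ Ω) := (hm j x hx).trans
          (measureReal_mono (inter_subset_inter_left _ (ball_subset_ball hj.le)) hAfin)
        have h2 : (1 / 4 : ℝ) ^ j = (1 / 2) ^ j * (4 * (1 / 2) ^ (j + 2)) := by
          rw [pow_add, show (1 / 4 : ℝ) = 1 / 2 * (1 / 2) by norm_num, mul_pow]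
          ring
        calc ε / 4 * (1 / 4) ^ j * m j
            = ε * (1 / 2) ^ (j + 2) * m j * (1 / 2) ^ j := by rw [h2]; ring
          _ ≤ ε * r * volume.real (ball x r ∩ Ω) * (1 / 2) ^ j := by
              have := (hm0 j).le
              gcongr
      · refine le_of_eq_of_le ?_ zero_le
        refine setLIntegral_eq_zero hAm fun y hy => ?_
        have hle : infDist y Ωᶜ < (1 / 2) ^ (j + 2) :=
          (infDist_le_dist_of_mem hxc).trans_lt ((mem_ball.1 hy.1).trans_le (not_lt.1 hj))
        have hz : ζ.toFun j y = 0 := by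
          by_contra hne
          have h1 := ζ.lower j y hne
          have h2 : (1 / 2 : ℝ) ^ (j + 2) ≤ (1 / 2) ^ (j + 1) := half_pow_le_half_pow (by omega)
          linarith
        have hmz : mollify (φ j) (fun y => ζ.toFun j y * U y) y = 0 := by
          by_contra hne
          exact (mollify_piece_lower hφ hne).not_gt hle
        simp [hz, hmz]
    refine squeeze_zero' (g := fun r : ℝ => ε * r * 2)
      (Eventually.of_forall fun r => integral_nonneg fun y => abs_nonneg _)
      (eventually_nhdsWithin_of_forall fun r hr => hkey r hr) ?_
    refine tendsto_nhdsWithin_of_tendsto_nhds ?_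
    have : Continuous fun r : ℝ => ε * r * 2 := by fun_prop
    simpa using this.tendsto 0
  · intro F _ _ _ T hT ξ hξ
    obtain ⟨ψ, hψ, hle⟩ := exists_testField_glue_le T hT hopen hbdd hU hφ (c := ε / 4)
      (fun j => (hb2 j).trans (hδ j)) hξ
    refine ⟨ψ, hψ, hle.trans ?_⟩
    rw [setIntegral_congr_fun hΩm (g := fun x => u x * divAlong T ψ x)
      fun x hx => by simp only [hUu x hx]]
    linarith

end Approximation

section Coordinates

theorem varSet_eq_varSetAlong (Ω : Set E2) (u : E2 → ℝ) :
    varSet Ω u = varSetAlong (ContinuousLinearMap.id ℝ E2) Ω u := by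
  have hdiv : ∀ ξ : E2 → E2, divAlong (ContinuousLinearMap.id ℝ E2) ξ = divg ξ := fun ξ => by
    ext x
    rw [divAlong_eq_sum]
    rfl
  ext a
  constructor
  · rintro ⟨ξ, h1, h2, h3, h4, rfl⟩
    exact ⟨ξ, ⟨h1, h2, h3, h4⟩, by rw [hdiv]⟩
  · rintro ⟨ξ, ⟨h1, h2, h3, h4⟩, rfl⟩
    exact ⟨ξ, h1, h2, h3, h4, by rw [hdiv]⟩

/-- The inclusion of the `k`-th coordinate axis into the plane. -/
def axisCLM (k : Fin 2) : ℝ →L[ℝ] E2 :=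
  (ContinuousLinearMap.id ℝ ℝ).smulRight (EuclideanSpace.single k (1 : ℝ))

theorem axisCLM_apply (k : Fin 2) (t : ℝ) :
    axisCLM k t = t • EuclideanSpace.single k (1 : ℝ) := rfl

theorem norm_axisCLM_apply (k : Fin 2) (t : ℝ) : ‖axisCLM k t‖ = ‖t‖ := by
  simp [axisCLM_apply, norm_smul]

theorem norm_axisCLM_le (k : Fin 2) : ‖axisCLM k‖ ≤ 1 :=
  ContinuousLinearMap.opNorm_le_bound _ zero_le_one fun t => by
    rw [norm_axisCLM_apply, one_mul]

theorem norm_comp_axisCLM (p : E2 →L[ℝ] ℝ) (k : Fin 2) :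
    ‖p ∘L axisCLM k‖ = |p (EuclideanSpace.single k 1)| := by
  have h : p ∘L axisCLM k =
      (ContinuousLinearMap.id ℝ ℝ).smulRight (p (EuclideanSpace.single k 1)) := by
    ext
    simp [axisCLM_apply]
  rw [h, ContinuousLinearMap.norm_smulRight_apply]
  simp

theorem divAlong_axisCLM (k : Fin 2) (ξ : E2 → ℝ) (x : E2) :
    divAlong (axisCLM k) ξ x = fderiv ℝ ξ x (EuclideanSpace.single k 1) := by
  rw [divAlong_eq_sum]
  fin_cases k <;> simp [axisCLM_apply]

theorem dirVarSet_eq_varSetAlong (Ω : Set E2) (u : E2 → ℝ) (k : Fin 2) :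
    dirVarSet Ω u k = varSetAlong (axisCLM k) Ω u := by
  ext a
  constructor
  · rintro ⟨ξ, h1, h2, h3, h4, rfl⟩
    exact ⟨ξ, ⟨h1, h2, h3, h4⟩, by simp only [divAlong_axisCLM]⟩
  · rintro ⟨ξ, ⟨h1, h2, h3, h4⟩, rfl⟩
    exact ⟨ξ, h1, h2, h3, h4, by simp only [divAlong_axisCLM]⟩

theorem varSetAlong_axisCLM_subset (Ω : Set E2) (u : E2 → ℝ) (k : Fin 2) :
    varSetAlong (axisCLM k) Ω u ⊆ varSetAlong (ContinuousLinearMap.id ℝ E2) Ω u := by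
  rintro _ ⟨ξ, hξ, rfl⟩
  have hsub : tsupport (fun x => axisCLM k (ξ x)) ⊆ tsupport ξ :=
    closure_mono fun x hx h0 => hx (by simp [h0])
  refine ⟨fun x => axisCLM k (ξ x), ⟨(axisCLM k).contDiff.comp hξ.contDiff,
    hξ.hasCompactSupport.comp_left (map_zero _), hsub.trans hξ.tsupport_subset,
    fun x => (norm_axisCLM_apply k _).trans_le (hξ.norm_le x)⟩, ?_⟩
  congr 1
  ext x
  have hd : fderiv ℝ (fun x => axisCLM k (ξ x)) x = axisCLM k ∘L fderiv ℝ ξ x :=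
    ((axisCLM k).hasFDerivAt.comp x
      (hξ.contDiff.differentiable one_ne_zero x).hasFDerivAt).fderiv
  rw [divAlong_eq_sum, divAlong_eq_sum, hd]
  rfl

end Coordinates

theorem HasTraceOn.of_tendsto_average {Ω : Set E2} (hbdd : Bornology.IsBounded Ω)
    {μb : Measure E2} {u v h : E2 → ℝ} (hu : IntegrableOn u Ω)
    (hv : IntegrableOn v Ω)
    (huv : ∀ᵐ x ∂μb, Tendsto (fun r => ⨍ y in ball x r ∩ Ω, |v y - u y|) (𝓝[>] (0 : ℝ)) (𝓝 0))
    (hh : HasTraceOn Ω μb u h) : HasTraceOn Ω μb v h := by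
  filter_upwards [huv, hh] with x hx1 hx2
  refine squeeze_zero (fun r => integral_nonneg fun y => abs_nonneg _) (fun r => ?_)
    (by simpa using hx1.add hx2)
  have hAfin : volume (ball x r ∩ Ω) ≠ ⊤ := (hbdd.subset inter_subset_right).measure_lt_top.ne
  have hui := hu.mono_set (inter_subset_right : ball x r ∩ Ω ⊆ Ω)
  have hvi := hv.mono_set (inter_subset_right : ball x r ∩ Ω ⊆ Ω)
  have h1 : IntegrableOn (fun y => |v y - u y|) (ball x r ∩ Ω) := (hvi.sub hui).abs
  have h2 : IntegrableOn (fun y => |u y - h x|) (ball x r ∩ Ω) :=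
    (hui.sub (integrableOn_const hAfin)).abs
  have h3 : IntegrableOn (fun y => |v y - h x|) (ball x r ∩ Ω) :=
    (hvi.sub (integrableOn_const hAfin)).abs
  rw [setAverage_eq, setAverage_eq, setAverage_eq, ← smul_add, ← integral_add h1 h2]
  refine smul_le_smul_of_nonneg_left (integral_mono h3 (h1.add h2) fun y => ?_) (by positivity)
  exact abs_sub_le _ _ _

/-- smoothing preserving the trace: if `Ω ⊆ ℝ²` is a bounded Lipschitz
open set and `u ∈ BV(Ω)`, there is a sequence `(u_n) ⊆ C¹(Ω) ∩ W^{1,1}(Ω)` with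
`u_n → u` in `L¹`, `∫_Ω |∇u_n| → ∫_Ω |Du|`, the same trace as `u` for every `n`, and
`∫_Ω |∂_k u_n| → ∫_Ω |D_k u|` for `k ∈ {1,2}`. -/
theorem stmt16 (Ω : Set E2) (hopen : IsOpen Ω) (hbdd : Bornology.IsBounded Ω)
    (hLip : IsLipschitzSet Ω) (u : E2 → ℝ) (hu : IsBVOn Ω u) :
    ∃ un : ℕ → E2 → ℝ,
      (∀ n, ContDiffOn ℝ 1 (un n) Ω) ∧
      (∀ n, IntegrableOn (un n) Ω volume) ∧
      (∀ n, IntegrableOn (fun x => ‖fderivWithin ℝ (un n) Ω x‖) Ω volume) ∧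
      Tendsto (fun n => ∫ x in Ω, |un n x - u x|) atTop (𝓝 0) ∧
      Tendsto (fun n => ∫ x in Ω, ‖fderivWithin ℝ (un n) Ω x‖) atTop (𝓝 (totalVar Ω u)) ∧
      (∀ h : E2 → ℝ, HasTraceOn Ω ((μH[1]).restrict (frontier Ω)) u h →
        ∀ n, HasTraceOn Ω ((μH[1]).restrict (frontier Ω)) (un n) h) ∧
      ∀ k : Fin 2,
        Tendsto (fun n => ∫ x in Ω, |fderivWithin ℝ (un n) Ω x (EuclideanSpace.single k 1)|)
          atTop (𝓝 (dirVar Ω u k)) := by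
  choose v hv hvi hL1 htr htest using fun n : ℕ =>
    exists_smooth_approx hopen hbdd hu.1 (Nat.one_div_pos_of_nat (α := ℝ) (n := n))
  have hε := tendsto_one_div_add_atTop_nhds_zero_nat (𝕜 := ℝ)
  have hlim : Tendsto (fun n => ∫ x in Ω, |v n x - u x|) atTop (𝓝 0) :=
    squeeze_zero (fun n => integral_nonneg fun x => abs_nonneg _) hL1 hε
  have hvar : BddAbove (varSetAlong (ContinuousLinearMap.id ℝ E2) Ω u) :=
    varSet_eq_varSetAlong Ω u ▸ hu.2
  have hfd : ∀ n, ∀ x ∈ Ω, fderivWithin ℝ (v n) Ω x = fderiv ℝ (v n) x := fun n x hx =>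
    fderivWithin_of_isOpen hopen hx
  have hvarlim : ∀ {F : Type} [NormedAddCommGroup F] [InnerProductSpace ℝ F]
      [FiniteDimensional ℝ F] (T : F →L[ℝ] E2), ‖T‖ ≤ 1 → BddAbove (varSetAlong T Ω u) →
      (∀ n, IntegrableOn (fun x => ‖fderiv ℝ (v n) x ∘L T‖) Ω) ∧
        Tendsto (fun n => ∫ x in Ω, ‖fderiv ℝ (v n) x ∘L T‖) atTop
          (𝓝 (sSup (varSetAlong T Ω u))) := fun {F} _ _ _ T hT hbd => by
    have := FiniteDimensional.complete ℝ F
    refine tendsto_integral_norm_fderiv_comp T hopen hbdd hu.1 hbd hv hvi hlim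
      (fun n => (Nat.one_div_pos_of_nat (α := ℝ) (n := n)).le) hε fun n ξ hξ => ?_
    obtain ⟨ψ, hψ, hle⟩ := htest n F T hT ξ hξ
    exact hle.trans (add_le_add_left (le_csSup hbd ⟨ψ, hψ, rfl⟩) _)
  obtain ⟨hgi, hgl⟩ := hvarlim (ContinuousLinearMap.id ℝ E2) ContinuousLinearMap.norm_id_le hvar
  refine ⟨v, fun n => (hv n).of_le one_le_two, hvi, fun n => ?_, hlim, ?_, fun h hh n => ?_,
    fun k => ?_⟩
  · exact (hgi n).congr_fun (fun x hx => by simp [hfd n x hx]) hopen.measurableSet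
  · rw [totalVar, varSet_eq_varSetAlong]
    refine hgl.congr fun n => setIntegral_congr_fun hopen.measurableSet fun x hx => ?_
    simp [hfd n x hx]
  · exact hh.of_tendsto_average hbdd hu.1 (hvi n)
      ((ae_restrict_mem isClosed_frontier.measurableSet).mono fun x hx => htr n x hx)
  · rw [dirVar, dirVarSet_eq_varSetAlong]
    refine (hvarlim (axisCLM k) (norm_axisCLM_le k)
      (hvar.mono (varSetAlong_axisCLM_subset Ω u k))).2.congr fun n =>
        setIntegral_congr_fun hopen.measurableSet fun x hx => ?_
    simp only [hfd n x hx, norm_comp_axisCLM]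
end
end

section
/- Let 𝔻 be the open unit disc in ℝ², let M ⊂ 𝕊¹ ∩ {x < 0} be an arc with endpoints (x₀, −y₀) and (x₀, y₀) where x₀ ≤ 0 and y₀ > 0, and let 𝒞 be the chord of M (so ℋ¹(𝒞) = 2y₀). Then the function u₀ = 1_{{(x,y): x < x₀}} restricted to 𝔻 belongs to BV(𝔻), has trace 1_M on 𝕊¹, satisfies ∫_𝔻 |Du₀| = 2y₀, and is a function of least gradient: ∫_𝔻 |Du₀| = inf { ∫_𝔻 |Du| : u ∈ BV(𝔻), tr_{𝕊¹} u = 1_M }. -/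
noncomputable section
open MeasureTheory Filter Set Topology Metric

theorem measurePreserving_pair :
    MeasurePreserving (fun z : ℝ × ℝ => (!₂[z.1, z.2] : E2)) volume volume :=
  (PiLp.volume_preserving_toLp (Fin 2)).comp (volume_preserving_finTwoArrow ℝ).symm

theorem measurableEmbedding_pair :
    MeasurableEmbedding (fun z : ℝ × ℝ => (!₂[z.1, z.2] : E2)) :=
  (MeasurableEquiv.finTwoArrow.symm.trans
    (MeasurableEquiv.toLp 2 (Fin 2 → ℝ))).measurableEmbedding

theorem integral_eq_integral_pair (f : E2 → ℝ) :
    ∫ p, f p = ∫ z : ℝ × ℝ, f !₂[z.1, z.2] :=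
  (measurePreserving_pair.integral_comp measurableEmbedding_pair f).symm

theorem MeasureTheory.Integrable.comp_pair {f : E2 → ℝ} (hf : Integrable f) :
    Integrable (fun z : ℝ × ℝ => f !₂[z.1, z.2]) :=
  (measurePreserving_pair.integrable_comp_emb measurableEmbedding_pair).2 hf

theorem hasFDerivAt_coord (i : Fin 2) (p : E2) :
    HasFDerivAt (fun q : E2 => q i) (EuclideanSpace.proj (𝕜 := ℝ) i : E2 →L[ℝ] ℝ) p :=
  (EuclideanSpace.proj (𝕜 := ℝ) i : E2 →L[ℝ] ℝ).hasFDerivAt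

theorem fderiv_mul_coord {η ψ : ℝ → ℝ} {p : E2} (hη : DifferentiableAt ℝ η (p 0))
    (hψ : DifferentiableAt ℝ ψ (p 1)) :
    fderiv ℝ (fun q : E2 => η (q 0) * ψ (q 1)) p (EuclideanSpace.single 0 1)
      = deriv η (p 0) * ψ (p 1) := by
  have h1 := hη.hasDerivAt.comp_hasFDerivAt p (hasFDerivAt_coord 0 p)
  have h2 := hψ.hasDerivAt.comp_hasFDerivAt p (hasFDerivAt_coord 1 p)
  have h : fderiv ℝ (fun q : E2 => η (q 0) * ψ (q 1)) p = _ := (h1.mul h2).fderiv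
  rw [h]
  simp [mul_comm]

theorem divg_single {φ : E2 → ℝ} {p : E2} (hφ : DifferentiableAt ℝ φ p) :
    divg (fun q => EuclideanSpace.single (0 : Fin 2) (φ q)) p
      = fderiv ℝ φ p (EuclideanSpace.single 0 1) := by
  have hs : (fun q => EuclideanSpace.single (0 : Fin 2) (φ q))
      = fun q => φ q • (EuclideanSpace.single (0 : Fin 2) (1 : ℝ) : E2) := by
    funext q
    ext i
    simp [PiLp.single_apply]
  have h : HasFDerivAt (fun q => φ q • (EuclideanSpace.single (0 : Fin 2) (1 : ℝ) : E2))
      ((fderiv ℝ φ p).smulRight (EuclideanSpace.single (0 : Fin 2) (1 : ℝ))) p :=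
    hφ.hasFDerivAt.smul_const _
  simp [divg, hs, h.fderiv]

theorem contDiff_pair {n : WithTop ℕ∞} {f g : ℝ → ℝ} (hf : ContDiff ℝ n f)
    (hg : ContDiff ℝ n g) : ContDiff ℝ n fun t => (!₂[f t, g t] : E2) := by
  rw [contDiff_piLp]
  intro i
  fin_cases i
  exacts [hf, hg]

theorem hasDerivAt_pair_left (x y : ℝ) :
    HasDerivAt (fun t : ℝ => (!₂[t, y] : E2)) (EuclideanSpace.single 0 1) x := by
  have h : (fun t : ℝ => (!₂[t, y] : E2))
      = fun t => t • (EuclideanSpace.single (0 : Fin 2) (1 : ℝ)) + !₂[0, y] := by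
    funext t; ext i; fin_cases i <;> simp
  rw [h]
  simpa using ((hasDerivAt_id x).smul_const
    (EuclideanSpace.single (0 : Fin 2) (1 : ℝ))).add_const (!₂[0, y] : E2)

theorem hasDerivAt_pair_right (x y : ℝ) :
    HasDerivAt (fun t : ℝ => (!₂[x, t] : E2)) (EuclideanSpace.single 1 1) y := by
  have h : (fun t : ℝ => (!₂[x, t] : E2))
      = fun t => t • (EuclideanSpace.single (1 : Fin 2) (1 : ℝ)) + !₂[x, 0] := by
    funext t; ext i; fin_cases i <;> simp
  rw [h]
  simpa using ((hasDerivAt_id y).smul_const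
    (EuclideanSpace.single (1 : Fin 2) (1 : ℝ))).add_const (!₂[x, 0] : E2)

section Line

variable {ξ : E2 → E2} {γ : ℝ → E2} {i : Fin 2}

theorem contDiff_coord_line (hξ : ContDiff ℝ 1 ξ) (hγ : ContDiff ℝ 1 γ) :
    ContDiff ℝ 1 fun t => ξ (γ t) i :=
  (contDiff_piLp (p := 2)).1 (hξ.comp hγ) i

theorem hasCompactSupport_coord_line (hc : HasCompactSupport ξ) (hγi : ∀ t, γ t i = t) :
    HasCompactSupport fun t => ξ (γ t) i := by
  obtain ⟨R, hR⟩ := hc.isBounded.subset_closedBall 0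
  refine HasCompactSupport.intro (isCompact_closedBall 0 R) fun t ht => ?_
  have h0 : ξ (γ t) = 0 := by
    refine image_eq_zero_of_notMem_tsupport fun h => ht ?_
    have h := hR h
    rw [mem_closedBall_zero_iff] at h ⊢
    have h' := PiLp.norm_apply_le (γ t) i
    rw [hγi t] at h'
    exact h'.trans h
  simp [h0]

theorem deriv_coord_line (hξ : ContDiff ℝ 1 ξ)
    (hγ' : ∀ t, HasDerivAt γ (EuclideanSpace.single i 1) t) (t : ℝ) :
    deriv (fun t => ξ (γ t) i) t = fderiv ℝ ξ (γ t) (EuclideanSpace.single i 1) i :=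
  ((hasFDerivAt_coord i _).comp_hasDerivAt t
    ((hξ.differentiable one_ne_zero _).hasFDerivAt.comp_hasDerivAt t (hγ' t))).deriv

end Line

theorem setIntegral_Iio_fderiv_fst {ξ : E2 → E2} (hξ : ContDiff ℝ 1 ξ)
    (hc : HasCompactSupport ξ) (a y : ℝ) :
    ∫ x in Iio a, fderiv ℝ ξ !₂[x, y] (EuclideanSpace.single 0 1) 0 = ξ !₂[a, y] 0 := by
  have h := HasCompactSupport.integral_Iic_deriv_eq
    (contDiff_coord_line (i := 0) hξ (contDiff_pair contDiff_id (contDiff_const (c := y))))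
    (hasCompactSupport_coord_line hc fun t => rfl) a
  rw [integral_Iic_eq_integral_Iio] at h
  simp_rw [← deriv_coord_line hξ fun t => hasDerivAt_pair_left t y]
  exact h

theorem integral_fderiv_snd {ξ : E2 → E2} (hξ : ContDiff ℝ 1 ξ) (hc : HasCompactSupport ξ)
    (x : ℝ) : ∫ y, fderiv ℝ ξ !₂[x, y] (EuclideanSpace.single 1 1) 1 = 0 := by
  have hg := contDiff_coord_line (i := 1) hξ
    (contDiff_pair (contDiff_const (c := x)) contDiff_id)
  have hgc := hasCompactSupport_coord_line (i := 1) (γ := fun t => !₂[x, t]) hc fun t => rfl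
  simp_rw [← deriv_coord_line hξ fun t => hasDerivAt_pair_right x t]
  exact integral_eq_zero_of_hasDerivAt_of_integrable
    (fun y => (hg.differentiable one_ne_zero y).hasDerivAt)
    ((hg.continuous_deriv le_rfl).integrable_of_hasCompactSupport hgc.deriv)
    (hg.continuous.integrable_of_hasCompactSupport hgc)

theorem support_divg_subset (ξ : E2 → E2) : Function.support (divg ξ) ⊆ tsupport ξ := by
  refine fun p hp => support_fderiv_subset ℝ fun h => hp ?_
  simp [divg, h]

theorem setIntegral_halfPlane_divg {ξ : E2 → E2} (hξ : ContDiff ℝ 1 ξ)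
    (hc : HasCompactSupport ξ) (a : ℝ) :
    ∫ p in {p : E2 | p 0 < a}, divg ξ p = ∫ y, ξ !₂[a, y] 0 := by
  have hm : MeasurableSet {p : E2 | p 0 < a} :=
    (isOpen_lt (by fun_prop) continuous_const).measurableSet
  have hi : ∀ i : Fin 2,
      Integrable fun p => fderiv ℝ ξ p (EuclideanSpace.single i 1) i := by
    intro i
    have hcont : Continuous fun p => fderiv ℝ ξ p (EuclideanSpace.single i 1) i :=
      (EuclideanSpace.proj (𝕜 := ℝ) i : E2 →L[ℝ] ℝ).continuous.comp
        ((hξ.continuous_fderiv one_ne_zero).clm_apply continuous_const)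
    exact hcont.integrable_of_hasCompactSupport
      ((hc.fderiv ℝ).comp_left (g := fun L : E2 →L[ℝ] E2 => L (EuclideanSpace.single i 1) i) rfl)
  have e : ∀ i : Fin 2, Integrable (fun z : ℝ × ℝ => {p : E2 | p 0 < a}.indicator
      (fun p => fderiv ℝ ξ p (EuclideanSpace.single i 1) i) !₂[z.1, z.2]) :=
    fun i => ((hi i).indicator hm).comp_pair
  have hsum : {p : E2 | p 0 < a}.indicator (divg ξ) = fun p => ∑ i : Fin 2,
      {p : E2 | p 0 < a}.indicator (fun p => fderiv ℝ ξ p (EuclideanSpace.single i 1) i) p := by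
    funext p
    by_cases hp : p 0 < a <;> simp [indicator, hp, divg]
  rw [← integral_indicator hm, integral_eq_integral_pair, hsum]
  simp only [Fin.sum_univ_two]
  rw [integral_add (e 0) (e 1), Measure.volume_eq_prod, integral_prod_symm _ (e 0),
    integral_prod _ (e 1)]
  have h1 : ∀ x : ℝ, ∫ y, {p : E2 | p 0 < a}.indicator
      (fun p => fderiv ℝ ξ p (EuclideanSpace.single 1 1) 1) !₂[x, y] = 0 := by
    intro x
    by_cases hx : x < a
    · simpa [indicator, hx] using integral_fderiv_snd hξ hc x
    · simp [indicator, hx]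
  have h0 : ∀ y : ℝ, ∫ x, {p : E2 | p 0 < a}.indicator
      (fun p => fderiv ℝ ξ p (EuclideanSpace.single 0 1) 0) !₂[x, y] = ξ !₂[a, y] 0 := by
    intro y
    rw [← setIntegral_Iio_fderiv_fst hξ hc a y, ← integral_indicator measurableSet_Iio]
    rfl
  simp [h0, h1]

theorem pair_mem_ball {x y : ℝ} : (!₂[x, y] : E2) ∈ ball (0 : E2) 1 ↔ x ^ 2 + y ^ 2 < 1 := by
  rw [mem_ball_zero_iff, EuclideanSpace.norm_eq, Real.sqrt_lt' one_pos]
  simp [Fin.sum_univ_two]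

theorem le_two_mul_of_mem_varSet_halfPlane {x₀ y₀ : ℝ} (hy₀ : 0 < y₀)
    (hcirc : x₀ ^ 2 + y₀ ^ 2 = 1) {v : ℝ}
    (hv : v ∈ varSet (ball (0 : E2) 1) ({p : E2 | p 0 < x₀}.indicator 1)) : v ≤ 2 * y₀ := by
  obtain ⟨ξ, hξ, hc, hsupp, hnorm, rfl⟩ := hv
  have hm : MeasurableSet {p : E2 | p 0 < x₀} :=
    (isOpen_lt (by fun_prop) continuous_const).measurableSet
  have h1 : ∫ p in ball (0 : E2) 1, {p : E2 | p 0 < x₀}.indicator 1 p * divg ξ p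
      = ∫ p in {p : E2 | p 0 < x₀}, divg ξ p := by
    rw [setIntegral_eq_integral_of_forall_compl_eq_zero, ← integral_indicator hm]
    · congr with p
      by_cases hp : p 0 < x₀ <;> simp [indicator, hp]
    · intro p hp
      have : divg ξ p = 0 := by
        by_contra h
        exact hp (hsupp (support_divg_subset ξ h))
      simp [this]
  rw [h1, setIntegral_halfPlane_divg hξ hc]
  have h2 : ∀ y, ‖ξ !₂[x₀, y] 0‖ ≤ 1 := fun y => (PiLp.norm_apply_le _ 0).trans (hnorm _)
  rw [← setIntegral_eq_integral_of_forall_compl_eq_zero (s := Icc (-y₀) y₀)]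
  · refine (le_abs_self _).trans ((norm_setIntegral_le_of_norm_le_const (C := 1) (by simp)
      fun y _ => h2 y).trans ?_)
    simp [Real.volume_real_Icc]
    constructor <;> linarith
  · intro y hy
    have : ξ !₂[x₀, y] = 0 := by
      refine image_eq_zero_of_notMem_tsupport fun h => hy ?_
      have := pair_mem_ball.1 (hsupp h)
      exact abs_le.1 (abs_le_of_sq_le_sq (by linarith) hy₀.le)
    simp [this]

theorem hasTraceOn_halfPlane {x₀ y₀ : ℝ} (hcirc : x₀ ^ 2 + y₀ ^ 2 = 1) :
    HasTraceOn (ball (0 : E2) 1) ((μH[1]).restrict (sphere (0 : E2) 1))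
      ({p : E2 | p 0 < x₀}.indicator 1)
      ({p : E2 | p ∈ sphere (0 : E2) 1 ∧ p 0 < x₀}.indicator 1) := by
  have hfin : ({!₂[x₀, y₀], !₂[x₀, -y₀]} : Set E2).Finite := toFinite _
  have : NullSingletonClass (μH[1] : Measure E2) := Measure.nullSingletonClass_hausdorff E2 one_pos
  have hnull : ∀ᵐ x ∂(μH[1] : Measure E2), x ∉ ({!₂[x₀, y₀], !₂[x₀, -y₀]} : Set E2) :=
    measure_eq_zero_iff_ae_notMem.1 (hfin.measure_zero _)
  rw [HasTraceOn, ae_restrict_iff' isClosed_sphere.measurableSet]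
  filter_upwards [hnull] with x hx hxs
  have hne : x 0 ≠ x₀ := by
    rintro rfl
    refine hx ?_
    have h1 : x 0 ^ 2 + x 1 ^ 2 = 1 := by
      have := mem_sphere_zero_iff_norm.1 hxs
      rw [EuclideanSpace.norm_eq, Real.sqrt_eq_one] at this
      simpa [Fin.sum_univ_two] using this
    have h2 : x 1 = y₀ ∨ x 1 = -y₀ := sq_eq_sq_iff_eq_or_eq_neg.1 (by linarith)
    rcases h2 with h | h
    · left; ext i; fin_cases i <;> simp [h]
    · right; ext i; fin_cases i <;> simp [h]
  have hev : ∀ᶠ z in 𝓝 x, (z 0 < x₀ ↔ x 0 < x₀) := by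
    have hc : Continuous fun z : E2 => z 0 := by fun_prop
    rcases hne.lt_or_gt with h | h
    · filter_upwards [hc.continuousAt.eventually_lt continuousAt_const h] with z hz
      exact iff_of_true hz h
    · filter_upwards [continuousAt_const.eventually_lt hc.continuousAt h] with z hz
      exact iff_of_false hz.not_gt h.not_gt
  obtain ⟨ρ, hρ, hball⟩ := Metric.eventually_nhds_iff_ball.1 hev
  refine tendsto_const_nhds.congr' ?_
  filter_upwards [Ioo_mem_nhdsGT hρ] with r hr
  rw [setAverage_eq, setIntegral_eq_zero_of_forall_eq_zero, smul_zero]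
  intro z hz
  have h := hball z (ball_subset_ball hr.2.le hz.1)
  by_cases hx0 : x 0 < x₀
  · have hx1 : ‖x‖ = 1 := mem_sphere_zero_iff_norm.1 hxs
    simp [indicator, h, hx0, hx1]
  · simp [indicator, h, hx0]

theorem eventually_setIntegral_le_of_tendsto_average {Ω : Set E2} {f : E2 → ℝ} {p : E2}
    (hf : ∀ z, 0 ≤ f z)
    (h : Tendsto (fun r : ℝ => ⨍ z in ball p r ∩ Ω, f z) (𝓝[>] 0) (𝓝 0)) {ε : ℝ} (hε : 0 < ε) :
    ∀ᶠ r in 𝓝[>] (0 : ℝ), ∫ z in ball p r ∩ Ω, f z ≤ ε * r ^ 2 := by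
  filter_upwards [h.eventually (gt_mem_nhds (div_pos hε Real.pi_pos)), self_mem_nhdsWithin]
    with r hr hr0
  have hfin : volume (ball p r ∩ Ω) ≠ ⊤ :=
    ((measure_mono inter_subset_left).trans_lt measure_ball_lt_top).ne
  have hvol : volume.real (ball p r ∩ Ω) ≤ r ^ 2 * Real.pi := by
    have h1 : volume.real (ball p r) = r ^ 2 * Real.pi := by
      rw [measureReal_def, EuclideanSpace.volume_ball_fin_two, ENNReal.toReal_mul,
        ENNReal.toReal_pow, ENNReal.toReal_ofReal (le_of_lt hr0)]
      simp [Real.pi_pos.le]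
    exact h1 ▸ measureReal_mono inter_subset_left measure_ball_lt_top.ne
  rw [← measure_smul_setAverage _ hfin, smul_eq_mul]
  calc _ ≤ (r ^ 2 * Real.pi) * (ε / Real.pi) := by
        gcongr
        exact integral_nonneg hf
    _ = ε * r ^ 2 := by field_simp

theorem abs_setIntegral_mul_sub_le {Ω S : Set E2} {u g : E2 → ℝ} {c B : ℝ}
    (hΩ : MeasurableSet Ω) (hΩfin : volume Ω ≠ ⊤)
    (hu : IntegrableOn u Ω) (hg : Continuous g) (hB : ∀ p, |g p| ≤ B)
    (hsupp : Function.support g ⊆ S ∩ Ω) :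
    |(∫ p in Ω, u p * g p) - c * ∫ p, g p| ≤ B * ∫ p in S ∩ Ω, |u p - c| := by
  have hgb : ∀ μ : Measure E2, ∀ᵐ p ∂μ, ‖g p‖ ≤ B := fun μ => ae_of_all _ hB
  have hconst : IntegrableOn (fun _ : E2 => c) Ω := integrableOn_const hΩfin
  have hug : IntegrableOn (fun p => u p * g p) Ω :=
    hu.mul_bdd hg.aestronglyMeasurable (hgb _)
  have hcg : IntegrableOn (fun p => c * g p) Ω :=
    hconst.mul_bdd hg.aestronglyMeasurable (hgb _)
  have hsub : IntegrableOn (fun p => |u p - c|) (S ∩ Ω) :=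
    ((hu.sub hconst).mono_set inter_subset_right).abs
  have h1 : ∫ p, g p = ∫ p in Ω, g p :=
    (setIntegral_eq_integral_of_forall_compl_eq_zero fun p hp => by
      by_contra h; exact hp (hsupp h).2).symm
  have h2 : (∫ p in Ω, u p * g p) - c * ∫ p, g p = ∫ p in S ∩ Ω, (u p - c) * g p := by
    rw [h1, ← integral_const_mul, ← integral_sub hug hcg]
    rw [← setIntegral_eq_of_subset_of_forall_sdiff_eq_zero hΩ inter_subset_right]
    · simp_rw [sub_mul]
    · intro p hp
      have : g p = 0 := by by_contra h; exact hp.2 (hsupp h)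
      simp [this]
  rw [h2, ← integral_const_mul]
  rw [← Real.norm_eq_abs]
  refine norm_integral_le_of_norm_le (hsub.const_mul B) (ae_of_all _ fun p => ?_)
  rw [norm_mul, mul_comm]
  exact mul_le_mul_of_nonneg_right (hB p) (abs_nonneg _)

theorem deriv_smoothTransition_eq_zero {t : ℝ} (ht : t ∉ Icc (0 : ℝ) 1) :
    deriv Real.smoothTransition t = 0 := by
  rw [mem_Icc, not_and_or, not_le, not_le] at ht
  rcases ht with ht | ht
  · have h : Real.smoothTransition =ᶠ[𝓝 t] fun _ => 0 := by
      filter_upwards [Iio_mem_nhds ht] with s hs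
      exact Real.smoothTransition.zero_of_nonpos (le_of_lt hs)
    simp [h.deriv_eq]
  · have h : Real.smoothTransition =ᶠ[𝓝 t] fun _ => 1 := by
      filter_upwards [Ioi_mem_nhds ht] with s hs
      exact Real.smoothTransition.one_of_one_le (le_of_lt hs)
    simp [h.deriv_eq]

theorem continuous_deriv_smoothTransition : Continuous (deriv Real.smoothTransition) :=
  (Real.smoothTransition.contDiff (n := 1)).continuous_deriv le_rfl

theorem exists_abs_deriv_smoothTransition_le :
    ∃ C : ℝ, 0 < C ∧ ∀ t, |deriv Real.smoothTransition t| ≤ C := by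
  have hs : HasCompactSupport (deriv Real.smoothTransition) :=
    HasCompactSupport.intro isCompact_Icc fun t ht => deriv_smoothTransition_eq_zero ht
  obtain ⟨C, hC⟩ := hs.exists_bound_of_continuous continuous_deriv_smoothTransition
  exact ⟨max C 1, by positivity, fun t => (hC t).trans (le_max_left _ _)⟩

theorem integral_deriv_smoothTransition : ∫ t, deriv Real.smoothTransition t = 1 := by
  have hs : HasCompactSupport (deriv Real.smoothTransition) :=
    HasCompactSupport.intro isCompact_Icc fun t ht => deriv_smoothTransition_eq_zero ht
  have h := integral_of_hasDerivAt_of_tendsto (f := Real.smoothTransition) (m := 0) (n := 1)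
    (fun t => ((Real.smoothTransition.contDiff (n := 1)).differentiable one_ne_zero t).hasDerivAt)
    (continuous_deriv_smoothTransition.integrable_of_hasCompactSupport hs)
    (tendsto_const_nhds.congr' <| by
      filter_upwards [eventually_le_atBot 0] with t ht
      exact (Real.smoothTransition.zero_of_nonpos ht).symm)
    (tendsto_const_nhds.congr' <| by
      filter_upwards [eventually_ge_atTop 1] with t ht
      exact (Real.smoothTransition.one_of_one_le ht).symm)
  simpa using h

theorem dist_sq_pair (p : E2) (a b : ℝ) :
    dist p !₂[a, b] ^ 2 = (p 0 - a) ^ 2 + (p 1 - b) ^ 2 := by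
  rw [EuclideanSpace.dist_eq, Real.sq_sqrt (by positivity)]
  simp [Fin.sum_univ_two, Real.dist_eq, sq_abs]

/-- The horizontal variation of `u` in the part of the unit disc over the strip `|p 1 - y| ≤ r`
is at least `c`, as witnessed by a single test function. -/
def HasStripVariation (u : E2 → ℝ) (y r c : ℝ) : Prop :=
  ∃ φ : E2 → ℝ, ContDiff ℝ 1 φ ∧ HasCompactSupport φ ∧ tsupport φ ⊆ ball (0 : E2) 1 ∧
    (∀ p, φ p ≠ 0 → p 1 ∈ closedBall y r) ∧ (∀ p, |φ p| ≤ 1) ∧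
    c ≤ ∫ p in ball (0 : E2) 1, u p * fderiv ℝ φ p (EuclideanSpace.single 0 1)

theorem HasStripVariation.mono {u : E2 → ℝ} {y r c c' : ℝ} (h : HasStripVariation u y r c)
    (hc : c' ≤ c) : HasStripVariation u y r c' :=
  let ⟨φ, h1, h2, h3, h4, h5, h6⟩ := h
  ⟨φ, h1, h2, h3, h4, h5, hc.trans h6⟩

/-- Horizontal variation of a function in a thin horizontal strip of the disc, tested against a
product cutoff whose transitions happen at distance comparable to `δ` from the circle. -/
theorem hasStripVariation_of_rectangle {u : E2 → ℝ} (hu : IntegrableOn u (ball (0 : E2) 1))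
    {y s r δ ε C : ℝ} (hr : 0 < r) (hδ : 0 < δ) (hδs : 3 * δ ≤ 2 * s)
    (hin : (|y| + r) ^ 2 + (s - δ) ^ 2 < 1) (hε : 0 < ε) (hε1 : ε < 1)
    (hC : ∀ t, |deriv Real.smoothTransition t| ≤ C) :
    HasStripVariation u y r ((1 - ε) * (2 * r)
      - C / δ * ((∫ p in ball !₂[-s, y] (2 * δ + r) ∩ ball (0 : E2) 1, |u p - 1|)
        + ∫ p in ball !₂[s, y] (2 * δ + r) ∩ ball (0 : E2) 1, |u p - 0|)) := by
  set T := Real.smoothTransition with hT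
  have hTc : ContDiff ℝ 1 T := Real.smoothTransition.contDiff
  have hTd : ∀ t, HasDerivAt T (deriv T t) t := fun t =>
    (hTc.differentiable one_ne_zero t).hasDerivAt
  let ψ : ContDiffBump y := ⟨(1 - ε) * r, r, by nlinarith, by nlinarith⟩
  let a : ℝ → ℝ := fun t => (t + s) / δ - 1
  let b : ℝ → ℝ := fun t => (t - s) / δ + 2
  have ha : ∀ t, HasDerivAt a δ⁻¹ t := fun t => by
    simpa [a] using (((hasDerivAt_id t).add_const s).div_const δ).sub_const 1
  have hb : ∀ t, HasDerivAt b δ⁻¹ t := fun t => by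
    simpa [b] using (((hasDerivAt_id t).sub_const s).div_const δ).add_const 2
  have hac : ContDiff ℝ 1 a := by fun_prop
  have hbc : ContDiff ℝ 1 b := by fun_prop
  let η : ℝ → ℝ := fun t => T (a t) - T (b t)
  have hηc : ContDiff ℝ 1 η := (hTc.comp hac).sub (hTc.comp hbc)
  have hη' : ∀ t, deriv η t = deriv T (a t) * δ⁻¹ - deriv T (b t) * δ⁻¹ := fun t =>
    (((hTd _).comp t (ha t)).sub ((hTd _).comp t (hb t))).deriv
  have hη1 : ∀ t, |η t| ≤ 1 := fun t => abs_sub_le_iff.2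
    ⟨by linarith [Real.smoothTransition.le_one (a t), Real.smoothTransition.nonneg (b t)],
     by linarith [Real.smoothTransition.le_one (b t), Real.smoothTransition.nonneg (a t)]⟩
  have hδ0 : δ ≠ 0 := hδ.ne'
  have hη0 : ∀ t, η t ≠ 0 → -s + δ ≤ t ∧ t ≤ s - δ := by
    intro t ht
    by_contra hcon
    refine ht ?_
    rw [not_and_or, not_le, not_le] at hcon
    rcases hcon with h | h
    · have h1 : a t ≤ 0 := by
        simp only [a]; rw [sub_nonpos, div_le_one hδ]; linarith
      have h2 : b t ≤ 0 := by
        have : (t - s) / δ ≤ -2 := by rw [div_le_iff₀ hδ]; linarith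
        simp only [b]; linarith
      simp [η, hT, Real.smoothTransition.zero_of_nonpos h1,
        Real.smoothTransition.zero_of_nonpos h2]
    · have h1 : 1 ≤ a t := by
        have : 2 ≤ (t + s) / δ := by rw [le_div_iff₀ hδ]; linarith
        simp only [a]; linarith
      have h2 : 1 ≤ b t := by
        have : -1 ≤ (t - s) / δ := by rw [le_div_iff₀ hδ]; linarith
        simp only [b]; linarith
      simp [η, hT, Real.smoothTransition.one_of_one_le h1,
        Real.smoothTransition.one_of_one_le h2]
  have hψ0 : ∀ t, ψ t ≠ 0 → |t - y| < r := by
    intro t ht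
    by_contra h
    exact ht (ψ.zero_of_le_dist (by simpa [ψ, Real.dist_eq] using h))
  have hψ1 : ∀ t, |ψ t| ≤ 1 := fun t => by rw [abs_of_nonneg ψ.nonneg]; exact ψ.le_one
  have hψc : ContDiff ℝ 1 ψ := ψ.contDiff
  let K : Set E2 := {p | (-s + δ ≤ p 0 ∧ p 0 ≤ s - δ) ∧ |p 1 - y| ≤ r}
  have hKcl : IsClosed K := by
    have h0 : Continuous fun p : E2 => p 0 := by fun_prop
    have h1 : Continuous fun p : E2 => |p 1 - y| := by fun_prop
    exact ((isClosed_le continuous_const h0).inter (isClosed_le h0 continuous_const)).inter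
      (isClosed_le h1 continuous_const)
  have hKball : K ⊆ ball (0 : E2) 1 := by
    rintro p ⟨⟨h1, h2⟩, h3⟩
    have h4 : |p 1| ≤ |y| + r := by
      have := abs_sub_abs_le_abs_sub (p 1) y
      linarith
    have h5 : p 1 ^ 2 ≤ (|y| + r) ^ 2 := sq_le_sq.2 (h4.trans (le_abs_self _))
    have h6 : p 0 ^ 2 ≤ (s - δ) ^ 2 :=
      sq_le_sq.2 ((abs_le.2 ⟨by linarith, h2⟩).trans (le_abs_self _))
    rw [mem_ball_zero_iff, EuclideanSpace.norm_eq, Real.sqrt_lt' one_pos]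
    simp only [Fin.sum_univ_two, Real.norm_eq_abs, sq_abs]
    linarith
  have hKc : IsCompact K :=
    (isCompact_closedBall (0 : E2) 1).of_isClosed_subset hKcl (hKball.trans ball_subset_closedBall)
  let φ : E2 → ℝ := fun p => η (p 0) * ψ (p 1)
  have hφK : Function.support φ ⊆ K := fun p hp =>
    ⟨hη0 _ (left_ne_zero_of_mul hp), (hψ0 _ (right_ne_zero_of_mul hp)).le⟩
  refine ⟨φ, ?_, HasCompactSupport.of_support_subset_isCompact hKc hφK,
    (closure_minimal hφK hKcl).trans hKball, fun p hp => (hφK hp).2, fun p => ?_, ?_⟩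
  · exact (hηc.comp (by fun_prop)).mul (hψc.comp (by fun_prop))
  · rw [abs_mul]
    exact mul_le_one₀ (hη1 _) (abs_nonneg _) (hψ1 _)
  let gl : E2 → ℝ := fun p => deriv T (a (p 0)) * δ⁻¹ * ψ (p 1)
  let gr : E2 → ℝ := fun p => deriv T (b (p 0)) * δ⁻¹ * ψ (p 1)
  have hderiv : ∀ p, fderiv ℝ φ p (EuclideanSpace.single 0 1) = gl p - gr p := by
    intro p
    have := fderiv_mul_coord (p := p) (hηc.differentiable one_ne_zero _)
      (hψc.differentiable one_ne_zero _)
    rw [this, hη']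
    simp only [gl, gr]; ring
  have hT'c : Continuous (deriv T) := continuous_deriv_smoothTransition
  have hψcont : Continuous ψ := ψ.continuous
  have hglc : Continuous gl := by
    have := hac.continuous
    fun_prop
  have hgrc : Continuous gr := by
    have := hbc.continuous
    fun_prop
  have hbound : ∀ c t, |deriv T c * δ⁻¹ * ψ t| ≤ C / δ := by
    intro c t
    rw [abs_mul, abs_mul, abs_of_pos (inv_pos.2 hδ), div_eq_mul_inv]
    have := hC c
    have h0 : 0 ≤ C := (abs_nonneg _).trans this
    calc _ ≤ C * δ⁻¹ * 1 := by gcongr; exact hψ1 t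
      _ = _ := mul_one _
  have hT0 : ∀ t, deriv T t ≠ 0 → 0 ≤ t ∧ t ≤ 1 := fun t ht => by
    by_contra h
    exact ht (deriv_smoothTransition_eq_zero h)
  have hgls : Function.support gl ⊆ ball !₂[-s, y] (2 * δ + r) ∩ ball (0 : E2) 1 := by
    intro p hp
    have h1 := hψ0 _ (right_ne_zero_of_mul hp)
    obtain ⟨h2, h3⟩ := hT0 _ (left_ne_zero_of_mul (left_ne_zero_of_mul hp))
    have h2' : δ ≤ p 0 + s := by
      simp only [a] at h2; rwa [sub_nonneg, one_le_div hδ] at h2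
    have h3' : p 0 + s ≤ 2 * δ := by
      rw [← div_le_iff₀ hδ]; simp only [a] at h3; linarith
    refine ⟨?_, hKball ⟨⟨by linarith, by linarith⟩, h1.le⟩⟩
    rw [mem_ball]
    refine lt_of_pow_lt_pow_left₀ 2 (by positivity) ?_
    rw [dist_sq_pair]
    have h4 : (p 1 - y) ^ 2 < r ^ 2 := sq_lt_sq.2 (h1.trans_le (le_abs_self _))
    nlinarith
  have hgrs : Function.support gr ⊆ ball !₂[s, y] (2 * δ + r) ∩ ball (0 : E2) 1 := by
    intro p hp
    have h1 := hψ0 _ (right_ne_zero_of_mul hp)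
    obtain ⟨h2, h3⟩ := hT0 _ (left_ne_zero_of_mul (left_ne_zero_of_mul hp))
    have h2' : -2 * δ ≤ p 0 - s := by
      rw [← le_div_iff₀ hδ]; simp only [b] at h2; linarith
    have h3' : p 0 - s ≤ -1 * δ := by
      rw [← div_le_iff₀ hδ]; simp only [b] at h3; linarith
    refine ⟨?_, hKball ⟨⟨by linarith, by linarith⟩, h1.le⟩⟩
    rw [mem_ball]
    refine lt_of_pow_lt_pow_left₀ 2 (by positivity) ?_
    rw [dist_sq_pair]
    have h4 : (p 1 - y) ^ 2 < r ^ 2 := sq_lt_sq.2 (h1.trans_le (le_abs_self _))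
    nlinarith
  have hfin : volume (ball (0 : E2) 1) ≠ ⊤ := measure_ball_lt_top.ne
  have hl := abs_setIntegral_mul_sub_le (c := 1) measurableSet_ball hfin hu hglc
    (fun p => hbound _ _) hgls
  have hr' := abs_setIntegral_mul_sub_le (c := 0) measurableSet_ball hfin hu hgrc
    (fun p => hbound _ _) hgrs
  have hint : ∀ g : E2 → ℝ, Continuous g → (∀ p, |g p| ≤ C / δ) →
      IntegrableOn (fun p => u p * g p) (ball (0 : E2) 1) := fun g hg hgb =>
    hu.mul_bdd hg.aestronglyMeasurable (ae_of_all _ hgb)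
  have hsplit : ∫ p in ball (0 : E2) 1, u p * fderiv ℝ φ p (EuclideanSpace.single 0 1)
      = (∫ p in ball (0 : E2) 1, u p * gl p) - ∫ p in ball (0 : E2) 1, u p * gr p := by
    rw [← integral_sub (hint gl hglc fun p => hbound _ _) (hint gr hgrc fun p => hbound _ _)]
    simp_rw [hderiv, mul_sub]
  have hgl : ∫ p, gl p = ∫ t, ψ t := by
    rw [integral_eq_integral_pair, Measure.volume_eq_prod]
    have h := integral_prod_mul (μ := (volume : Measure ℝ)) (ν := (volume : Measure ℝ))
      (fun t => deriv T (a t) * δ⁻¹) ψ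
    have h1 : ∫ t, deriv T (a t) * δ⁻¹ = 1 := by
      have h2 : ∀ t, a t = δ⁻¹ * t + (s / δ - 1) := fun t => by simp only [a]; field_simp; ring
      have h3 := Measure.integral_comp_mul_left (fun t => deriv T (t + (s / δ - 1))) δ⁻¹
      rw [integral_add_right_eq_self (deriv T), integral_deriv_smoothTransition] at h3
      simp_rw [h2, integral_mul_const, h3]
      simp [abs_of_pos hδ, hδ0]
    rw [h1, one_mul] at h
    exact h
  have hψint : (1 - ε) * (2 * r) ≤ ∫ t, ψ t := by
    have h := ψ.measure_closedBall_le_integral volume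
    rw [Real.volume_real_closedBall (by simp only [ψ]; nlinarith)] at h
    simp only [ψ] at h ⊢
    linarith
  have h1 := (abs_le.1 hl).1
  have h2 := (abs_le.1 hr').2
  rw [hsplit]
  rw [hgl] at h1
  linarith

theorem eventually_hasStripVariation {u : E2 → ℝ} (hu : IntegrableOn u (ball (0 : E2) 1))
    {y s : ℝ} (hs : 0 < s) (hys : y ^ 2 + s ^ 2 = 1)
    (hl : Tendsto (fun r : ℝ => ⨍ z in ball !₂[-s, y] r ∩ ball (0 : E2) 1, |u z - 1|)
      (𝓝[>] 0) (𝓝 0))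
    (hr : Tendsto (fun r : ℝ => ⨍ z in ball !₂[s, y] r ∩ ball (0 : E2) 1, |u z - 0|)
      (𝓝[>] 0) (𝓝 0)) {ε : ℝ} (hε : 0 < ε) (hε1 : ε < 1) :
    ∀ᶠ r in 𝓝[>] (0 : ℝ), HasStripVariation u y r ((1 - 2 * ε) * (2 * r)) := by
  obtain ⟨C, hC0, hC⟩ := exists_abs_deriv_smoothTransition_le
  have hK : 0 < 2 * s⁻¹ + 1 := by positivity
  have hscale : Tendsto (fun r : ℝ => (2 * s⁻¹ + 1) * r) (𝓝[>] 0) (𝓝[>] 0) := by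
    refine tendsto_nhdsWithin_iff.2 ⟨?_, ?_⟩
    · have : Continuous fun r : ℝ => (2 * s⁻¹ + 1) * r := by fun_prop
      simpa using (this.tendsto 0).mono_left nhdsWithin_le_nhds
    · filter_upwards [self_mem_nhdsWithin] with r hr0
      exact mul_pos hK hr0
  have hε' : 0 < ε * s⁻¹ / (C * (2 * s⁻¹ + 1) ^ 2) := by positivity
  have el := hscale.eventually
    (eventually_setIntegral_le_of_tendsto_average (fun _ => abs_nonneg _) hl hε')
  have er := hscale.eventually
    (eventually_setIntegral_le_of_tendsto_average (fun _ => abs_nonneg _) hr hε')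
  have hy1 : |y| < 1 := (sq_lt_one_iff_abs_lt_one y).1 (by nlinarith [pow_pos hs 2])
  have h1y : 0 < 2 * (1 - |y|) / (1 + s⁻¹ ^ 2) := by
    have : 0 < 1 - |y| := by linarith
    positivity
  have h2y : 0 < 2 * s ^ 2 / 3 := by positivity
  filter_upwards [el, er, Ioo_mem_nhdsGT h1y, Ioo_mem_nhdsGT h2y] with r hrl hrr hr1 hr2
  have hr0 : 0 < r := hr1.1
  have hδ : 0 < s⁻¹ * r := by positivity
  have hss : s * s⁻¹ = 1 := mul_inv_cancel₀ hs.ne'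
  have hr1' : r * (1 + s⁻¹ ^ 2) < 2 * (1 - |y|) := (lt_div_iff₀ (by positivity)).1 hr1.2
  have hin : (|y| + r) ^ 2 + (s - s⁻¹ * r) ^ 2 < 1 := by
    have : (|y| + r) ^ 2 + (s - s⁻¹ * r) ^ 2
        = (y ^ 2 + s ^ 2) + r * (2 * |y| - 2 * (s * s⁻¹) + r * (1 + s⁻¹ ^ 2)) := by
      rw [← sq_abs y]; ring
    rw [this, hys, hss]
    nlinarith
  have h3δ : 3 * (s⁻¹ * r) ≤ 2 * s := by
    have := hr2.2.le
    rw [inv_mul_eq_div, ← mul_div_assoc, div_le_iff₀ hs]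
    nlinarith
  refine (hasStripVariation_of_rectangle hu hr0 hδ h3δ hin hε hε1 hC).mono ?_
  rw [show 2 * (s⁻¹ * r) + r = (2 * s⁻¹ + 1) * r by ring]
  have hsum := mul_le_mul_of_nonneg_left (add_le_add hrl hrr) (div_pos hC0 hδ).le
  have hval : C / (s⁻¹ * r) * (ε * s⁻¹ / (C * (2 * s⁻¹ + 1) ^ 2) * ((2 * s⁻¹ + 1) * r) ^ 2
      + ε * s⁻¹ / (C * (2 * s⁻¹ + 1) ^ 2) * ((2 * s⁻¹ + 1) * r) ^ 2) = 2 * ε * r := by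
    have := hK.ne'
    generalize 2 * s⁻¹ + 1 = k at *
    field_simp
    ring
  rw [hval] at hsum
  linarith

theorem sum_le_totalVar {u : E2 → ℝ} (hu : IsBVOn (ball (0 : E2) 1) u) {ρ c : ℝ → ℝ}
    (F : Finset ℝ) (hF : (F : Set ℝ).PairwiseDisjoint fun y => closedBall y (ρ y))
    (h : ∀ y ∈ F, HasStripVariation u y (ρ y) (c y)) :
    ∑ y ∈ F, c y ≤ totalVar (ball (0 : E2) 1) u := by
  choose! φ hφ hφc hφs hφy hφ1 hφi using h
  have hcont : ContDiff ℝ 1 fun p => ∑ y ∈ F, φ y p := ContDiff.sum hφ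
  have hdiff : ∀ y ∈ F, Differentiable ℝ (φ y) := fun y hy => (hφ y hy).differentiable one_ne_zero
  have hsupp : Function.support (fun p => ∑ y ∈ F, φ y p) ⊆ ⋃ y ∈ F, tsupport (φ y) := by
    intro p hp
    obtain ⟨y, hy, hyp⟩ := Finset.exists_ne_zero_of_sum_ne_zero hp
    exact mem_biUnion hy (subset_tsupport _ hyp)
  have hKc : IsCompact (⋃ y ∈ F, tsupport (φ y)) := F.isCompact_biUnion hφc
  let ξ : E2 → E2 := fun p => EuclideanSpace.single (0 : Fin 2) (∑ y ∈ F, φ y p)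
  have hξ : ContDiff ℝ 1 ξ := by
    rw [contDiff_piLp]
    intro i
    fin_cases i
    · simpa [ξ] using hcont
    · simpa [ξ] using contDiff_const
  have hξs : Function.support ξ ⊆ ⋃ y ∈ F, tsupport (φ y) := fun p hp => hsupp fun h0 => hp <| by
    simp only at h0
    simp [ξ, h0]
  have hle : ∀ p, |∑ y ∈ F, φ y p| ≤ 1 := by
    intro p
    by_cases hp : ∃ y ∈ F, φ y p ≠ 0
    · obtain ⟨y, hy, hyp⟩ := hp
      rw [Finset.sum_eq_single_of_mem y hy]
      · exact hφ1 y hy p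
      · intro z hz hzy
        by_contra hzp
        exact (hF hz hy hzy).le_bot ⟨hφy z hz p hzp, hφy y hy p hyp⟩
    · push Not at hp
      simp [Finset.sum_eq_zero hp]
  have hint : ∀ y ∈ F, IntegrableOn
      (fun p => u p * fderiv ℝ (φ y) p (EuclideanSpace.single 0 1)) (ball (0 : E2) 1) := by
    intro y hy
    have hc : Continuous fun p => fderiv ℝ (φ y) p (EuclideanSpace.single 0 1) :=
      ((hφ y hy).continuous_fderiv one_ne_zero).clm_apply continuous_const
    obtain ⟨B, hB⟩ := ((hφc y hy).fderiv_apply ℝ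
      (EuclideanSpace.single (0 : Fin 2) (1 : ℝ))).exists_bound_of_continuous hc
    exact hu.1.mul_bdd hc.aestronglyMeasurable (ae_of_all _ hB)
  calc ∑ y ∈ F, c y
      ≤ ∑ y ∈ F, ∫ p in ball (0 : E2) 1, u p * fderiv ℝ (φ y) p (EuclideanSpace.single 0 1) :=
        Finset.sum_le_sum hφi
    _ = ∫ p in ball (0 : E2) 1, u p * divg ξ p := by
        rw [← integral_finsetSum F hint]
        congr with p
        rw [divg_single (hcont.differentiable one_ne_zero p),
          fderiv_fun_sum fun y hy => hdiff y hy p,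
          _root_.sum_apply, Finset.mul_sum]
    _ ≤ totalVar (ball (0 : E2) 1) u := by
        refine le_csSup hu.2 ⟨ξ, hξ, HasCompactSupport.of_support_subset_isCompact hKc hξs,
          (closure_minimal hξs hKc.isClosed).trans (iUnion₂_subset hφs), fun p => ?_, rfl⟩
        simpa [ξ] using hle p

theorem volume_le_totalVar {u : E2 → ℝ} (hu : IsBVOn (ball (0 : E2) 1) u) {S : Set ℝ} {κ : ℝ}
    (hκ : 0 ≤ κ)
    (hS : ∀ y ∈ S, ∀ᶠ r in 𝓝[>] (0 : ℝ), HasStripVariation u y r (κ * (2 * r))) :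
    ENNReal.ofReal κ * volume S ≤ ENNReal.ofReal (totalVar (ball (0 : E2) 1) u) := by
  obtain ⟨t, ρ, htc, -, hρ, hcov, hdisj⟩ :=
    Besicovitch.exists_disjoint_closedBall_covering_ae volume
      (fun y => {r | HasStripVariation u y r (κ * (2 * r))}) S
      (fun y hy δ hδ => ((hS y hy).and (Ioo_mem_nhdsGT hδ)).exists) (fun _ => 1)
      fun _ _ => one_pos
  have hvol : volume S ≤ ∑' y : t, ENNReal.ofReal (2 * ρ y) := by
    calc volume S ≤ volume (⋃ y ∈ t, closedBall y (ρ y)) := measure_mono_ae (ae_le_set.2 hcov)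
      _ ≤ ∑' y : t, volume (closedBall (y : ℝ) (ρ y)) := measure_biUnion_le _ htc _
      _ = _ := by simp_rw [Real.volume_closedBall]
  refine (mul_le_mul_right hvol _).trans ?_
  rw [← ENNReal.tsum_mul_left, ENNReal.tsum_eq_iSup_sum]
  refine iSup_le fun F => ?_
  have hpos : ∀ y ∈ F, 0 ≤ κ * (2 * ρ y) := fun y _ =>
    mul_nonneg hκ (mul_nonneg zero_le_two (hρ y y.2).2.1.le)
  simp_rw [← ENNReal.ofReal_mul hκ]
  rw [← ENNReal.ofReal_sum_of_nonneg hpos]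
  refine ENNReal.ofReal_le_ofReal ?_
  have hmem : ∀ y ∈ F.map (Function.Embedding.subtype (· ∈ t)), y ∈ t := fun y hy => by
    obtain ⟨z, -, rfl⟩ := Finset.mem_map.1 hy
    exact z.2
  have h := sum_le_totalVar hu (ρ := ρ) (c := fun y => κ * (2 * ρ y))
    (F.map (Function.Embedding.subtype (· ∈ t))) (hdisj.subset hmem)
    fun y hy => (hρ y (hmem y hy)).1
  rwa [Finset.sum_map] at h

theorem two_mul_le_totalVar {x₀ y₀ : ℝ} (hx₀ : x₀ ≤ 0) (hy₀ : 0 < y₀)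
    (hcirc : x₀ ^ 2 + y₀ ^ 2 = 1) {u : E2 → ℝ} (hu : IsBVOn (ball (0 : E2) 1) u)
    (htr : HasTraceOn (ball (0 : E2) 1) ((μH[1]).restrict (sphere (0 : E2) 1)) u
      ({p : E2 | p ∈ sphere (0 : E2) 1 ∧ p 0 < x₀}.indicator 1)) :
    2 * y₀ ≤ totalVar (ball (0 : E2) 1) u := by
  rw [HasTraceOn, ae_restrict_iff' isClosed_sphere.measurableSet] at htr
  set h : E2 → ℝ := {p : E2 | p ∈ sphere (0 : E2) 1 ∧ p 0 < x₀}.indicator 1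
  set N : Set E2 := {x | ¬ (x ∈ sphere (0 : E2) 1 →
    Tendsto (fun r : ℝ => ⨍ z in ball x r ∩ ball (0 : E2) 1, |u z - h x|) (𝓝[>] 0) (𝓝 0))}
  have hN : μH[1] N = 0 := htr
  have hlip : LipschitzWith 1 fun p : E2 => p 1 := LipschitzWith.of_dist_le_mul fun p q => by
    simpa [Real.dist_eq, dist_eq_norm] using PiLp.norm_apply_le (p - q) 1
  have hproj : volume ((fun p : E2 => p 1) '' N) = 0 := by
    have := hlip.hausdorffMeasure_image_le zero_le_one N
    rw [hN, mul_zero, hausdorffMeasure_real] at this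
    exact le_antisymm this bot_le
  set S : Set ℝ := Ioo (-y₀) y₀ \ (fun p : E2 => p 1) '' N
  have hvolS : volume S = ENNReal.ofReal (2 * y₀) := by
    rw [measure_sdiff_null hproj, Real.volume_Ioo]
    ring_nf
  have hS : ∀ ε ∈ Ioo (0 : ℝ) 1, ∀ y ∈ S,
      ∀ᶠ r in 𝓝[>] (0 : ℝ), HasStripVariation u y r ((1 - 2 * ε) * (2 * r)) := by
    rintro ε ⟨hε, hε1⟩ y ⟨hy, hyN⟩
    have hyy : y ^ 2 < y₀ ^ 2 := sq_lt_sq' hy.1 hy.2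
    have hpos : 0 < 1 - y ^ 2 := by nlinarith
    set s := √(1 - y ^ 2)
    have hs : 0 < s := Real.sqrt_pos.2 hpos
    have hs2 : s ^ 2 = 1 - y ^ 2 := Real.sq_sqrt hpos.le
    have hsph : ∀ a : ℝ, a ^ 2 = s ^ 2 → (!₂[a, y] : E2) ∈ sphere (0 : E2) 1 := fun a ha => by
      rw [mem_sphere_zero_iff_norm, EuclideanSpace.norm_eq, Real.sqrt_eq_one]
      simp [Fin.sum_univ_two, ha, hs2]
    have hgood : ∀ a : ℝ, a ^ 2 = s ^ 2 → Tendsto (fun r : ℝ =>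
        ⨍ z in ball !₂[a, y] r ∩ ball (0 : E2) 1, |u z - h !₂[a, y]|) (𝓝[>] 0) (𝓝 0) := by
      intro a ha
      by_contra hcon
      exact hyN ⟨!₂[a, y], fun hc => hcon (hc (hsph a ha)), rfl⟩
    have hl := hgood (-s) (neg_sq s)
    have hr := hgood s rfl
    have hsx : -s < x₀ := by
      have : |x₀| < |s| := sq_lt_sq.1 (by linarith)
      rw [abs_of_nonpos hx₀, abs_of_pos hs] at this
      linarith
    have h1 : h !₂[-s, y] = 1 := by
      have hmem : !₂[-s, y] ∈ {p : E2 | p ∈ sphere (0 : E2) 1 ∧ p 0 < x₀} :=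
        ⟨hsph _ (neg_sq s), hsx⟩
      simp only [h, indicator_of_mem hmem, Pi.one_apply]
    have h0 : h !₂[s, y] = 0 := indicator_of_notMem (fun hc => by
      have : s < x₀ := hc.2
      linarith) _
    rw [h1] at hl
    rw [h0] at hr
    exact eventually_hasStripVariation hu.1 hs (by linarith) hl hr hε hε1
  have hV : ∀ ε ∈ Ioo (0 : ℝ) (1 / 2),
      (1 - 2 * ε) * (2 * y₀) ≤ max (totalVar (ball (0 : E2) 1) u) 0 := by
    rintro ε ⟨hε, hε1⟩
    have hκ : 0 ≤ 1 - 2 * ε := by linarith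
    have hle := volume_le_totalVar hu hκ (hS ε ⟨hε, by linarith⟩)
    rw [hvolS, ← ENNReal.ofReal_mul hκ] at hle
    exact ENNReal.ofReal_le_ofReal_iff'.1 hle |>.elim le_max_of_le_left le_max_of_le_right
  have hlim : Tendsto (fun ε : ℝ => (1 - 2 * ε) * (2 * y₀)) (𝓝[>] 0) (𝓝 (2 * y₀)) := by
    have : Continuous fun ε : ℝ => (1 - 2 * ε) * (2 * y₀) := by fun_prop
    simpa using (this.tendsto 0).mono_left nhdsWithin_le_nhds
  have hmax : 2 * y₀ ≤ max (totalVar (ball (0 : E2) 1) u) 0 :=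
    le_of_tendsto hlim (mem_of_superset (Ioo_mem_nhdsGT one_half_pos) hV)
  exact (le_max_iff.1 hmax).resolve_right (by linarith)

theorem isBVOn_halfPlane {x₀ y₀ : ℝ} (hy₀ : 0 < y₀) (hcirc : x₀ ^ 2 + y₀ ^ 2 = 1) :
    IsBVOn (ball (0 : E2) 1) ({p : E2 | p 0 < x₀}.indicator 1) := by
  have hm : MeasurableSet {p : E2 | p 0 < x₀} :=
    (isOpen_lt (by fun_prop) continuous_const).measurableSet
  exact ⟨(integrableOn_const measure_ball_lt_top.ne).indicator hm,
    2 * y₀, fun _ hv => le_two_mul_of_mem_varSet_halfPlane hy₀ hcirc hv⟩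

/-- on the unit disc `𝔻`, let `M` be the arc of `𝕊¹` to the left of the
vertical line `x = x₀` (with `x₀ ≤ 0`, endpoints `(x₀, ±y₀)`, `y₀ > 0`).  Then
`u₀ = 1_{{x < x₀}}` belongs to `BV(𝔻)`, has trace `1_M`, satisfies
`∫_𝔻 |Du₀| = 2y₀ = ℋ¹(𝒞)` and is a function of least gradient for this datum. -/
theorem stmt17 (x₀ y₀ : ℝ) (hx₀ : x₀ ≤ 0) (hy₀ : 0 < y₀)
    (hcirc : x₀ ^ 2 + y₀ ^ 2 = 1)
    (M : Set E2) (hM : M = {p : E2 | p ∈ sphere (0 : E2) 1 ∧ p 0 < x₀})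
    (u₀ : E2 → ℝ) (hu₀ : u₀ = ({p : E2 | p 0 < x₀}).indicator 1) :
    IsBVOn (ball (0 : E2) 1) u₀ ∧
    HasTraceOn (ball (0 : E2) 1) ((μH[1]).restrict (sphere (0 : E2) 1)) u₀
      (M.indicator 1) ∧
    totalVar (ball (0 : E2) 1) u₀ = 2 * y₀ ∧
    ∀ u : E2 → ℝ, IsBVOn (ball (0 : E2) 1) u →
      HasTraceOn (ball (0 : E2) 1) ((μH[1]).restrict (sphere (0 : E2) 1)) u
        (M.indicator 1) →
      totalVar (ball (0 : E2) 1) u₀ ≤ totalVar (ball (0 : E2) 1) u := by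
  subst hM hu₀
  have hBV := isBVOn_halfPlane hy₀ hcirc
  have htr := hasTraceOn_halfPlane hcirc
  have heq : totalVar (ball (0 : E2) 1) ({p : E2 | p 0 < x₀}.indicator 1) = 2 * y₀ :=
    le_antisymm
      (Real.sSup_le (fun _ hv => le_two_mul_of_mem_varSet_halfPlane hy₀ hcirc hv) (by positivity))
      (two_mul_le_totalVar hx₀ hy₀ hcirc hBV htr)
  refine ⟨hBV, htr, heq, fun u hu hut => ?_⟩
  rw [heq]
  exact two_mul_le_totalVar hx₀ hy₀ hcirc hu hut
end
end
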